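/- arXiv:1804.00957 — 3 statements merged into one kernel-verified Lean document; each statement's English description precedes it below -/
import Mathlib

section
/- Let G be a finite graph with at least one edge and let r ≥ 2 be a real number. Then Φ_c(G) < r if and only if G admits a sub-r-MCNZF, i.e. a modular circular nowhere-zero r-flow all of whose values lie in the image of the open interval (1, r−1). -/
open scoped Classical

/-- A finite multigraph: finite vertex and edge types together with a reference
orientation recorded by source and target maps.  The underlying undirected graph
is obtained by forgetting the directions; reorienting an edge corresponds to
negating the value of a flow on it. -/
structure Multigraph where
  V : Type
  E : Type
  [fintypeV : Fintype V]
  [fintypeE : Fintype E]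
  src : E → V
  tgt : E → V

attribute [instance] Multigraph.fintypeV Multigraph.fintypeE

namespace Multigraph

/-- `f` is a flow with respect to the reference orientation: at every vertex the
sum of the values on incoming edges equals the sum on outgoing edges. -/
def IsFlow (G : Multigraph) {M : Type*} [AddCommMonoid M] (f : G.E → M) : Prop :=
  ∀ v : G.V, (∑ e : G.E, Set.indicator {e' : G.E | G.tgt e' = v} f e)
           = ∑ e : G.E, Set.indicator {e' : G.E | G.src e' = v} f e

/-- The edge `e` joins the vertices `v` and `w` (in either direction). -/
def Joins (G : Multigraph) (e : G.E) (v w : G.V) : Prop :=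
  (G.src e = v ∧ G.tgt e = w) ∨ (G.src e = w ∧ G.tgt e = v)

/-- `v` and `w` are adjacent: some edge joins them. -/
def Adj (G : Multigraph) (v w : G.V) : Prop := ∃ e : G.E, G.Joins e v w

/-- The degree of a vertex (loops count twice). -/
noncomputable def degree (G : Multigraph) (v : G.V) : ℕ :=
  Nat.card {e : G.E // G.src e = v} + Nat.card {e : G.E // G.tgt e = v}

/-- A set of edges is an even subgraph if every vertex is incident with an even
number of its edges (loops counting twice). -/
def IsEvenSubgraph (G : Multigraph) (J : Set G.E) : Prop :=
  ∀ v : G.V, Even (Nat.card {e : G.E // e ∈ J ∧ G.src e = v}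
    + Nat.card {e : G.E // e ∈ J ∧ G.tgt e = v})

/-- `G` has a circular nowhere-zero `r`-flow: for some orientation (encoded by
possibly negating values with respect to the reference orientation) there is a
real-valued flow with all values in `[1, r-1]`. -/
def HasCNZF (G : Multigraph) (r : ℝ) : Prop :=
  ∃ f : G.E → ℝ, G.IsFlow f ∧
    ∀ e : G.E, f e ∈ Set.Icc 1 (r - 1) ∨ -f e ∈ Set.Icc 1 (r - 1)

/-- The circular flow number `Φ_c(G)`, as an extended real (`⊤` if no `r`-CNZF
exists for any `r ≥ 2`). -/
noncomputable def flowNumber (G : Multigraph) : EReal :=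
  sInf {x : EReal | ∃ r : ℝ, x = (r : EReal) ∧ 2 ≤ r ∧ G.HasCNZF r}

/-- `G` has a modular circular nowhere-zero `r`-flow: a flow with values in
`ℝ/rℤ` lying (up to reorientation) in the image of `[1, r-1]`. -/
def HasMCNZF (G : Multigraph) (r : ℝ) : Prop :=
  ∃ f : G.E → AddCircle r, G.IsFlow f ∧
    ∀ e : G.E, f e ∈ (fun t : ℝ => (t : AddCircle r)) '' Set.Icc 1 (r - 1) ∨
      -f e ∈ (fun t : ℝ => (t : AddCircle r)) '' Set.Icc 1 (r - 1)

/-- `G` has a sub-`r`-MCNZF: an `r`-MCNZF all of whose values lie in the image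
of the open interval `(1, r-1)`. -/
def HasSubMCNZF (G : Multigraph) (r : ℝ) : Prop :=
  ∃ f : G.E → AddCircle r, G.IsFlow f ∧
    ∀ e : G.E, f e ∈ (fun t : ℝ => (t : AddCircle r)) '' Set.Ioo 1 (r - 1) ∨
      -f e ∈ (fun t : ℝ => (t : AddCircle r)) '' Set.Ioo 1 (r - 1)

end Multigraph

/-- The right endpoint representative: the representative of `b` in `(a, a+5]`. -/
def arcEnd (a b : ℤ) : ℤ := a + (if (b - a) % 5 = 0 then 5 else (b - a) % 5)

/-- The open integer arc `(a, b)` in `ℝ/5ℤ`: the image of the real interval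
`(a, b')` where `b'` is the representative of `b` in `(a, a+5]`. -/
def arc (a b : ℤ) : Set (AddCircle (5 : ℝ)) :=
  (fun t : ℝ => (t : AddCircle (5 : ℝ))) '' Set.Ioo (a : ℝ) (arcEnd a b : ℝ)

/-- `SI_5`: the symmetric subsets of `ℝ/5ℤ` that are unions of open integer arcs. -/
def SI5 : Set (Set (AddCircle (5 : ℝ))) :=
  {A | (∀ z, z ∈ A ↔ -z ∈ A) ∧ ∃ s : Set (ℤ × ℤ), A = ⋃ p ∈ s, arc p.1 p.2}

/-- The measure `Me A`: the number of (distinct) open unit arcs contained in `A`. -/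
noncomputable def Me (A : Set (AddCircle (5 : ℝ))) : ℕ :=
  Set.ncard {B : Set (AddCircle (5 : ℝ)) | B ⊆ A ∧ ∃ k : ℤ, B = arc k (k + 1)}

namespace Multigraph

/-- `G⁺_{xy}`: the graph `G` with one extra edge `e⁺` from `x` to `y`. -/
def addEdge (G : Multigraph) (x y : G.V) : Multigraph where
  V := G.V
  E := Option G.E
  src := fun e => e.elim x G.src
  tgt := fun e => e.elim y G.tgt

/-- The open 5-capacity of the generalised edge `G_{xy}`: all values that can pass
from `x` to `y` through `G` by a modular 5-flow of `G⁺_{xy}` whose values on the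
edges of `G` lie in the open arc `(1,4)`. -/
def CP5 (G : Multigraph) (x y : G.V) : Set (AddCircle (5 : ℝ)) :=
  {w | ∃ f : Option G.E → AddCircle (5 : ℝ),
    (G.addEdge x y).IsFlow f ∧ (∀ e : G.E, f (some e) ∈ arc 1 4) ∧ f none = w}

/-- `G` has a sub-5-MCNZF: a modular 5-flow with all values in the open arc `(1,4)`. -/
def HasSub5 (G : Multigraph) : Prop :=
  ∃ f : G.E → AddCircle (5 : ℝ), G.IsFlow f ∧ ∀ e : G.E, f e ∈ arc 1 4

/-- `G` has a `σ`-faithful flow: a modular 5-flow `f` with `f e ∈ σ e` for all `e`. -/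
def HasFaithful (G : Multigraph) (σ : G.E → Set (AddCircle (5 : ℝ))) : Prop :=
  ∃ f : G.E → AddCircle (5 : ℝ), G.IsFlow f ∧ ∀ e : G.E, f e ∈ σ e

/-- `G` has a `σ_{J,A}`-faithful flow: a modular 5-flow with values in `A` on the
edges of `J` and in the open arc `(1,4)` on all other edges. -/
def HasFaithfulOn (G : Multigraph) (J : Set G.E) (A : Set (AddCircle (5 : ℝ))) : Prop :=
  ∃ f : G.E → AddCircle (5 : ℝ), G.IsFlow f ∧ (∀ e ∈ J, f e ∈ A) ∧ ∀ e ∉ J, f e ∈ arc 1 4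

end Multigraph

/-- Cyclic successor on `Fin n`. -/
def rot (n : ℕ) (i : Fin n) : Fin n := ⟨(i.val + 1) % n, Nat.mod_lt _ i.pos⟩

/-- The wheel `W_n`: the external cycle `v_1 … v_n` (vertices `some i`, rim edges
`Sum.inl i` from `v_i` to `v_{i+1}`) together with a hub `v_c = none` joined to
every rim vertex by the spokes `Sum.inr i`. -/
def wheel (n : ℕ) : Multigraph where
  V := Option (Fin n)
  E := Fin n ⊕ Fin n
  src := fun e => match e with
    | Sum.inl i => some i
    | Sum.inr _ => none
  tgt := fun e => match e with
    | Sum.inl i => some (rot n i)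
    | Sum.inr i => some i

/-- The net inflow of the edge weighting `x` at each vertex of the directed multigraph with
source map `s` and target map `t`. -/
noncomputable def netInflow {V E : Type*} [Fintype E] (s t : E → V) :
    (E → ℝ) →ₗ[ℝ] (V → ℝ) where
  toFun x v := ∑ e with t e = v, x e - ∑ e with s e = v, x e
  map_add' x y := by
    ext v
    simp only [Pi.add_apply, Finset.sum_add_distrib]
    ring
  map_smul' c x := by
    ext v
    simp only [Pi.smul_apply, smul_eq_mul, ← Finset.mul_sum, RingHom.id_apply]
    ring

theorem netInflow_apply {V E : Type*} [Fintype E] (s t : E → V) (x : E → ℝ) (v : V) :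
    netInflow s t x v = ∑ e with t e = v, x e - ∑ e with s e = v, x e := rfl

theorem sum_netInflow {V E : Type*} [Fintype V] [Fintype E] (s t : E → V) (x : E → ℝ) :
    ∑ v, netInflow s t x v = 0 := by
  have h (p : E → V) : ∑ v, ∑ e with p e = v, x e = ∑ e, x e := Finset.sum_fiberwise _ p x
  rw [Finset.sum_congr rfl fun v _ => netInflow_apply s t x v, Finset.sum_sub_distrib, h, h,
    sub_self]

/-- A nonempty edge set meeting no vertex exactly once (loops counting twice) supports a
nonzero circulation. -/
theorem exists_circulation_of_degree_ne_one {V E : Type*} [Fintype V] [Fintype E]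
    (s t : E → V) (F : Finset E) (hF : F.Nonempty)
    (hdeg : ∀ v, (F.filter (t · = v)).card + (F.filter (s · = v)).card ≠ 1) :
    ∃ z : E → ℝ, z ≠ 0 ∧ (∀ e ∉ F, z e = 0) ∧ netInflow s t z = 0 := by
  let U : Finset V := F.image s ∪ F.image t
  obtain ⟨e₀, he₀⟩ := hF
  have hv₀ : s e₀ ∈ U := Finset.mem_union_left _ (Finset.mem_image_of_mem s he₀)
  have hU : U.card ≤ F.card := by
    have ht : ∑ v ∈ U, (F.filter (t · = v)).card = F.card :=
      (Finset.card_eq_sum_card_fiberwise fun e he =>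
        Finset.mem_union_right _ (Finset.mem_image_of_mem t he)).symm
    have hs : ∑ v ∈ U, (F.filter (s · = v)).card = F.card :=
      (Finset.card_eq_sum_card_fiberwise fun e he =>
        Finset.mem_union_left _ (Finset.mem_image_of_mem s he)).symm
    have h2 : ∑ v ∈ U, 2 ≤ ∑ v ∈ U, ((F.filter (t · = v)).card + (F.filter (s · = v)).card) := by
      refine Finset.sum_le_sum fun v hv => ?_
      have hpos : 0 < (F.filter (t · = v)).card + (F.filter (s · = v)).card := by
        rcases Finset.mem_union.1 hv with h | h <;> obtain ⟨e, he, rfl⟩ := Finset.mem_image.1 h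
        · exact Nat.add_pos_right _ (Finset.card_pos.2 ⟨e, by simp [he]⟩)
        · exact Nat.add_pos_left (Finset.card_pos.2 ⟨e, by simp [he]⟩) _
      have := hdeg v
      omega
    rw [Finset.sum_add_distrib, ht, hs, Finset.sum_const, smul_eq_mul] at h2
    omega
  let ext : (F → ℝ) →ₗ[ℝ] (E → ℝ) := Function.ExtendByZero.linearMap ℝ Subtype.val
  let res : (V → ℝ) →ₗ[ℝ] ((U.erase (s e₀) : Finset V) → ℝ) :=
    LinearMap.funLeft ℝ ℝ Subtype.val
  have hker : LinearMap.ker (res ∘ₗ netInflow s t ∘ₗ ext) ≠ ⊥ := by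
    apply LinearMap.ker_ne_bot_of_finrank_lt
    simp only [Module.finrank_fintype_fun_eq_card, Fintype.card_coe]
    exact (Finset.card_erase_lt_of_mem hv₀).trans_le hU
  obtain ⟨w, hw, hw0⟩ := (Submodule.ne_bot_iff _).1 hker
  have hin (e : F) : ext w e = w e := Subtype.val_injective.extend_apply w 0 e
  have hout (e : E) (he : e ∉ F) : ext w e = 0 :=
    Function.extend_apply' w (0 : E → ℝ) e fun ⟨a, ha⟩ => he (ha ▸ a.2)
  have hne (v : V) (hv : v ≠ s e₀) : netInflow s t (ext w) v = 0 := by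
    by_cases hvU : v ∈ U
    · exact congrFun (LinearMap.mem_ker.1 hw) ⟨v, Finset.mem_erase.2 ⟨hv, hvU⟩⟩
    · have hin0 : ∀ e, (t e = v ∨ s e = v) → ext w e = 0 := fun e he => hout e fun heF => hvU <| by
        rcases he with rfl | rfl
        · exact Finset.mem_union_right _ (Finset.mem_image_of_mem t heF)
        · exact Finset.mem_union_left _ (Finset.mem_image_of_mem s heF)
      rw [netInflow_apply, Finset.sum_eq_zero, Finset.sum_eq_zero, sub_zero]
      · exact fun e he => hin0 e (.inr (Finset.mem_filter.1 he).2)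
      · exact fun e he => hin0 e (.inl (Finset.mem_filter.1 he).2)
  refine ⟨ext w, fun h => hw0 ?_, hout, ?_⟩
  · ext e
    rw [← hin, h]
    rfl
  · ext v
    by_cases hv : v = s e₀
    · rw [hv, ← Finset.sum_eq_single (s e₀) (fun v _ h => hne v h)
        (fun h => absurd (Finset.mem_univ _) h), sum_netInflow]
      rfl
    · exact hne v hv

/-- Moving a point of the unit cube along a direction supported on its fractional coordinates,
until some fractional coordinate becomes integral. -/
theorem exists_add_smul_mem_Icc_and_integral {E : Type*} [Fintype E] (x z : E → ℝ)
    (hx : ∀ e, x e ∈ Set.Icc (0 : ℝ) 1) (hz0 : z ≠ 0)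
    (hz : ∀ e, x e = 0 ∨ x e = 1 → z e = 0) :
    ∃ c : ℝ, (∀ e, x e + c * z e ∈ Set.Icc (0 : ℝ) 1) ∧
      ∃ e, ¬(x e = 0 ∨ x e = 1) ∧ (x e + c * z e = 0 ∨ x e + c * z e = 1) := by
  let b : E → ℝ := fun e => if 0 < z e then (1 - x e) / z e else x e / (-z e)
  obtain ⟨e₁, he₁⟩ := Function.ne_iff.1 hz0
  obtain ⟨e, he, hmin⟩ := Finset.exists_min_image (Finset.univ.filter (z · ≠ 0)) b
    ⟨e₁, by simpa using he₁⟩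
  have he : z e ≠ 0 := (Finset.mem_filter.1 he).2
  have hb (e : E) : 0 ≤ b e := by
    obtain ⟨h0, h1⟩ := hx e
    dsimp only [b]
    split_ifs with h
    · exact div_nonneg (by linarith) h.le
    · exact div_nonneg h0 (by linarith)
  refine ⟨b e, fun e' => ?_, e, fun h => he (hz e h), ?_⟩
  · obtain ⟨h0, h1⟩ := hx e'
    have hbe := hb e
    rcases lt_trichotomy (z e') 0 with h | h | h
    · have hle := hmin e' (by simp [h.ne])
      have : b e' = x e' / (-z e') := if_neg h.le.not_gt
      rw [this, le_div_iff₀ (by linarith)] at hle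
      constructor <;> nlinarith
    · simp [h, h0, h1]
    · have hle := hmin e' (by simp [h.ne'])
      have : b e' = (1 - x e') / z e' := if_pos h
      rw [this, le_div_iff₀ h] at hle
      constructor <;> nlinarith
  · rcases he.lt_or_gt with h | h
    · left
      have : b e = x e / (-z e) := if_neg h.le.not_gt
      rw [this]
      field_simp
      ring
    · right
      have : b e = (1 - x e) / z e := if_pos h
      rw [this]
      field_simp
      ring

/-- If the net inflow at a vertex is an integer, the number of fractional edge ends there is
not one. -/
theorem card_fractional_ne_one {V E : Type*} [Fintype E] (s t : E → V) (x : E → ℝ)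
    (hx : ∀ e, x e ∈ Set.Icc (0 : ℝ) 1) (v : V)
    (hv : netInflow s t x v ∈ (Int.castAddHom ℝ).range) (F : Finset E)
    (hF : ∀ e, e ∈ F ↔ ¬(x e = 0 ∨ x e = 1)) :
    (F.filter (t · = v)).card + (F.filter (s · = v)).card ≠ 1 := by
  have hsplit (p : E → V) :
      ∑ e with p e = v, x e - ∑ e ∈ F with p e = v, x e ∈ (Int.castAddHom ℝ).range := by
    rw [← Finset.sum_filter_add_sum_filter_not (Finset.univ.filter (p · = v)) (· ∈ F),
      Finset.filter_filter, Finset.filter_filter,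
      show Finset.univ.filter (fun e => p e = v ∧ e ∈ F) = F.filter (p · = v) by
        ext e; simp [and_comm], add_sub_cancel_left]
    refine sum_mem fun e he => ?_
    rcases not_not.1 (mt (hF e).2 (Finset.mem_filter.1 he).2.2) with h | h
    · exact ⟨0, by simp [h]⟩
    · exact ⟨1, by simp [h]⟩
  have hdiff : ∑ e ∈ F with t e = v, x e - ∑ e ∈ F with s e = v, x e ∈
      (Int.castAddHom ℝ).range := by
    convert add_mem (sub_mem hv (hsplit t)) (hsplit s) using 1
    rw [netInflow_apply]
    ring
  have hfrac (e : E) (he : e ∈ F) : x e ∉ (Int.castAddHom ℝ).range := by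
    rintro ⟨k, hk⟩
    replace hk : (k : ℝ) = x e := hk
    obtain ⟨h0, h1⟩ := hx e
    rw [← hk] at h0 h1
    have h0' : 0 ≤ k := by exact_mod_cast h0
    have h1' : k ≤ 1 := by exact_mod_cast h1
    refine (hF e).1 he ?_
    rw [← hk]
    obtain rfl | rfl : k = 0 ∨ k = 1 := by omega
    all_goals simp
  intro h
  rcases Nat.add_eq_one_iff.1 h with ⟨ht, hs⟩ | ⟨ht, hs⟩
  · obtain ⟨e, he⟩ := Finset.card_eq_one.1 hs
    rw [Finset.card_eq_zero.1 ht, he, Finset.sum_empty, Finset.sum_singleton, zero_sub,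
      neg_mem_iff] at hdiff
    exact hfrac e (Finset.mem_filter.1 (he ▸ Finset.mem_singleton_self e)).1 hdiff
  · obtain ⟨e, he⟩ := Finset.card_eq_one.1 ht
    rw [Finset.card_eq_zero.1 hs, he, Finset.sum_empty, Finset.sum_singleton, sub_zero] at hdiff
    exact hfrac e (Finset.mem_filter.1 (he ▸ Finset.mem_singleton_self e)).1 hdiff

/-- An edge weighting in the unit cube with integral net inflows can be rounded to a `0`-`1`
weighting with the same net inflows. -/
theorem exists_zero_one_netInflow_eq {V E : Type*} [Fintype V] [Fintype E] (s t : E → V)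
    (x : E → ℝ) (hx : ∀ e, x e ∈ Set.Icc (0 : ℝ) 1)
    (hint : ∀ v, netInflow s t x v ∈ (Int.castAddHom ℝ).range) :
    ∃ y : E → ℝ, (∀ e, y e = 0 ∨ y e = 1) ∧ netInflow s t y = netInflow s t x := by
  induction hn : (Finset.univ.filter fun e => ¬(x e = 0 ∨ x e = 1)).card
    using Nat.strong_induction_on generalizing x with
  | _ n ih =>
    subst hn
    set F := Finset.univ.filter fun e => ¬(x e = 0 ∨ x e = 1) with hFdef
    have hF (e : E) : e ∈ F ↔ ¬(x e = 0 ∨ x e = 1) := by simp [hFdef]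
    rcases F.eq_empty_or_nonempty with hempty | hne
    · exact ⟨x, fun e => not_not.1 (mt (hF e).2 (by simp [hempty])), rfl⟩
    obtain ⟨z, hz0, hzF, hz⟩ := exists_circulation_of_degree_ne_one s t F hne
      fun v => card_fractional_ne_one s t x hx v (hint v) F hF
    have hzx (e : E) (he : x e = 0 ∨ x e = 1) : z e = 0 := hzF e fun h => (hF e).1 h he
    obtain ⟨c, hc, e, hex, he⟩ := exists_add_smul_mem_Icc_and_integral x z hx hz0 hzx
    have hflow : netInflow s t (x + c • z) = netInflow s t x := by
      rw [map_add, map_smul, hz, smul_zero, add_zero]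
    have hlt : (Finset.univ.filter fun e => ¬((x + c • z) e = 0 ∨ (x + c • z) e = 1)).card <
        F.card := by
      refine Finset.card_lt_card ((Finset.ssubset_iff_of_subset fun a ha => ?_).2
        ⟨e, (hF e).2 hex, fun h => (Finset.mem_filter.1 h).2 he⟩)
      refine (hF a).2 fun h => (Finset.mem_filter.1 ha).2 ?_
      simpa [hzx a h] using h
    obtain ⟨y, hy, hyx⟩ := ih _ hlt (x + c • z) hc (fun v => hflow ▸ hint v) rfl
    exact ⟨y, hy, hyx.trans hflow⟩

namespace Multigraph

theorem isFlow_iff (G : Multigraph) {M : Type*} [AddCommMonoid M] (f : G.E → M) :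
    G.IsFlow f ↔ ∀ v, ∑ e with G.tgt e = v, f e = ∑ e with G.src e = v, f e := by
  simp only [IsFlow, Set.indicator_apply, Set.mem_ofPred_eq, Finset.sum_filter]

theorem isFlow_iff_netInflow_eq_zero (G : Multigraph) (f : G.E → ℝ) :
    G.IsFlow f ↔ netInflow G.src G.tgt f = 0 := by
  simp only [isFlow_iff, funext_iff, netInflow_apply, Pi.zero_apply, sub_eq_zero]

theorem IsFlow.map {G : Multigraph} {M N : Type*} [AddCommMonoid M] [AddCommMonoid N]
    {f : G.E → M} (hf : G.IsFlow f) (φ : M →+ N) : G.IsFlow fun e => φ (f e) := by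
  rw [isFlow_iff] at hf ⊢
  intro v
  rw [← map_sum, ← map_sum, hf v]

theorem HasCNZF.hasSubMCNZF_of_lt {G : Multigraph} {q r : ℝ} (h : G.HasCNZF q) (hq : 2 ≤ q)
    (hqr : q < r) : G.HasSubMCNZF r := by
  obtain ⟨f, hf, hfq⟩ := h
  obtain ⟨c, hc1, hc⟩ := exists_between ((one_lt_div (by linarith)).2 (sub_lt_sub_right hqr 1))
  rw [lt_div_iff₀ (by linarith)] at hc
  have hscale (a : ℝ) (ha : a ∈ Set.Icc 1 (q - 1)) : c * a ∈ Set.Ioo 1 (r - 1) := by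
    constructor <;> nlinarith [ha.1, ha.2]
  refine ⟨_, hf.map ((QuotientAddGroup.mk' (AddSubgroup.zmultiples r)).comp (AddMonoidHom.mulLeft c)), fun e => ?_⟩
  refine (hfq e).imp (fun h => ⟨_, hscale _ h, rfl⟩) fun h => ⟨_, hscale _ h, ?_⟩
  simp [mul_neg]

/-- A sub-`r`-MCNZF lifts to a real flow whose absolute values lie in `(1, r - 1)`. -/
theorem HasSubMCNZF.exists_real_flow {G : Multigraph} {r : ℝ} (h : G.HasSubMCNZF r)
    (hr : 0 < r) : ∃ g : G.E → ℝ, G.IsFlow g ∧ ∀ e, |g e| ∈ Set.Ioo 1 (r - 1) := by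
  obtain ⟨f, hf, hfr⟩ := h
  have hlift (e : G.E) : ∃ a ∈ Set.Ioo 1 (r - 1), (a : AddCircle r) = f e := by
    rcases hfr e with ⟨a, ha, hae⟩ | ⟨a, ha, hae⟩
    · exact ⟨a, ha, hae⟩
    · refine ⟨r - a, ⟨by linarith [ha.2], by linarith [ha.1]⟩, ?_⟩
      have hae : (a : AddCircle r) = -f e := hae
      rw [AddCircle.coe_sub, AddCircle.coe_period, hae, zero_sub, neg_neg]
  choose a ha hae using hlift
  have hint (v : G.V) : netInflow G.src G.tgt (r⁻¹ • a) v ∈ (Int.castAddHom ℝ).range := by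
    have hv := (G.isFlow_iff f).1 hf v
    simp only [← hae] at hv
    have h0 : ((netInflow G.src G.tgt a v : ℝ) : AddCircle r) = 0 := by
      rw [netInflow_apply, AddCircle.coe_sub, sub_eq_zero]
      let π := QuotientAddGroup.mk' (AddSubgroup.zmultiples r)
      exact (map_sum π _ _).trans (hv.trans (map_sum π _ _).symm)
    obtain ⟨n, hn⟩ := (AddCircle.coe_eq_zero_iff r).1 h0
    refine ⟨n, ?_⟩
    rw [map_smul, Pi.smul_apply, ← hn]
    simp [hr.ne', mul_comm]
  obtain ⟨y, hy, hya⟩ := exists_zero_one_netInflow_eq G.src G.tgt (r⁻¹ • a) (fun e => by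
    obtain ⟨h1, h2⟩ := ha e
    rw [Pi.smul_apply, smul_eq_mul, inv_mul_eq_div]
    exact ⟨div_nonneg (by linarith) hr.le, (div_le_one hr).2 (by linarith)⟩) hint
  refine ⟨a - r • y, ?_, fun e => ?_⟩
  · rw [isFlow_iff_netInflow_eq_zero, map_sub, map_smul, hya, map_smul, smul_inv_smul₀ hr.ne',
      sub_self]
  · obtain ⟨h1, h2⟩ := ha e
    rcases hy e with h | h
    · simpa [h, abs_of_pos (zero_lt_one.trans h1)] using ha e
    · have : |(a - r • y) e| = r - a e := by
        simp only [Pi.sub_apply, Pi.smul_apply, smul_eq_mul, h, mul_one]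
        rw [abs_of_neg (by linarith), neg_sub]
      rw [this]
      exact ⟨by linarith, by linarith⟩

theorem HasSubMCNZF.exists_hasCNZF_lt {G : Multigraph} [Nonempty G.E] {r : ℝ}
    (h : G.HasSubMCNZF r) (hr : 0 < r) : ∃ q, 2 ≤ q ∧ q < r ∧ G.HasCNZF q := by
  obtain ⟨g, hg, hgr⟩ := h.exists_real_flow hr
  obtain ⟨e₀, he₀⟩ := Finite.exists_max fun e => |g e|
  refine ⟨|g e₀| + 1, by linarith [(hgr e₀).1], by linarith [(hgr e₀).2], g, hg, fun e => ?_⟩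
  rw [add_sub_cancel_right]
  have hmem : |g e| ∈ Set.Icc 1 |g e₀| := ⟨(hgr e).1.le, he₀ e⟩
  exact (abs_choice (g e)).imp (fun h => by rwa [h] at hmem) fun h => by rwa [h] at hmem

end Multigraph

/-- for a finite graph with at least one edge and `r ≥ 2`,
`Φ_c(G) < r` iff `G` admits a sub-`r`-MCNZF. -/
theorem flowNumber_lt_iff_hasSubMCNZF (G : Multigraph) (hE : Nonempty G.E)
    (r : ℝ) (hr : 2 ≤ r) :
    G.flowNumber < (r : EReal) ↔ G.HasSubMCNZF r := by
  constructor
  · intro h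
    obtain ⟨_, ⟨q, rfl, hq, hG⟩, hqr⟩ := sInf_lt_iff.1 h
    exact hG.hasSubMCNZF_of_lt hq (EReal.coe_lt_coe_iff.1 hqr)
  · intro h
    obtain ⟨q, hq, hqr, hG⟩ := h.exists_hasCNZF_lt (by linarith)
    exact sInf_lt_iff.2 ⟨q, ⟨q, rfl, hq, hG⟩, EReal.coe_lt_coe_iff.2 hqr⟩
end

section
/- Every element of SI_5 is graphic: for every A ∈ SI_5 there exists a generalised edge whose open 5-capacity equals A, i.e. a finite graph G with two distinct terminals x, y such that CP_5(G_{xy}) = A. In other words, GI_5 = SI_5. -/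
open scoped Classical

theorem petersen_no_bisection : ∀ a b : Fin 5 → Bool,
    ∑ i, (if a i then 1 else 0 : ℤ) = ∑ i, (if b i then 1 else 0 : ℤ) →
    ∃ i, (a i = a (i + 1) ∧ a (i + 1) = a (i + 1 + 1)) ∨
      (b i = b (i + 2) ∧ b (i + 2) = b (i + 2 + 2)) ∨
      (a i = a (i + 1) ∧ b i = !a i) ∨ (a i = a (i + 1) ∧ b (i + 1) = !a i) ∨
      (b i = b (i + 2) ∧ a i = !b i) ∨ (b i = b (i + 2) ∧ a (i + 2) = !b i) := by
  decide +kernel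

theorem petersen_no_balanced (a b : Fin 5 → ℤ)
    (ha : ∀ i, 0 ≤ a i ∧ a i ≤ 1) (hb : ∀ i, 0 ≤ b i ∧ b i ≤ 1)
    (hsum : ∑ i, a i = ∑ i, b i)
    (houter : ∀ i, 0 < a i + a (i + 1) + a (i + 1 + 1) ∧ a i + a (i + 1) + a (i + 1 + 1) < 3)
    (hinner : ∀ i, 0 < b i + b (i + 2) + b (i + 2 + 2) ∧ b i + b (i + 2) + b (i + 2 + 2) < 3)
    (hl : ∀ i, -1 < a i + a (i + 1) - b i ∧ a i + a (i + 1) - b i < 2)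
    (hr : ∀ i, -1 < a i + a (i + 1) - b (i + 1) ∧ a i + a (i + 1) - b (i + 1) < 2)
    (hl' : ∀ i, -1 < b i + b (i + 2) - a i ∧ b i + b (i + 2) - a i < 2)
    (hr' : ∀ i, -1 < b i + b (i + 2) - a (i + 2) ∧ b i + b (i + 2) - a (i + 2) < 2) : False := by
  have hbool : ∀ c : Fin 5 → ℤ, (∀ i, 0 ≤ c i ∧ c i ≤ 1) →
      ∃ d : Fin 5 → Bool, c = fun i => if d i then 1 else 0 := fun c hc =>
    ⟨fun i => c i = 1, funext fun i => by have := hc i; by_cases h : c i = 1 <;> simp [h]; omega⟩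
  obtain ⟨a, rfl⟩ := hbool a ha
  obtain ⟨b, rfl⟩ := hbool b hb
  obtain ⟨i, h⟩ := petersen_no_bisection a b hsum
  specialize houter i
  specialize hinner i
  specialize hl i
  specialize hr i
  specialize hl' i
  specialize hr' i
  beta_reduce at *
  clear ha hb hsum
  rcases h with h | h | h | h | h | h <;> simp only [h] at * <;> grind

/-- A modular `5`-flow of the Petersen graph, with outer cycle `o`, spokes `s` and inner cycle `n`,
cannot have all values in `(1, 4)`, even if the value on one spoke is allowed to be `1` or `4`. -/
theorem petersen_no_flow {o s n : Fin 5 → ℝ} {a b : Fin 5 → ℤ}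
    (ho : ∀ i, 1 < o i ∧ o i < 4) (hs0 : 1 ≤ s 0 ∧ s 0 ≤ 4)
    (hs : ∀ i, i ≠ 0 → 1 < s i ∧ s i < 4) (hn : ∀ i, 1 < n i ∧ n i < 4)
    (ha : ∀ i, o (i + 1) + s (i + 1) - o i = 5 * a (i + 1))
    (hb : ∀ i, n i + s (i + 2) - n (i + 2) = 5 * b (i + 2)) : False := by
  have hs' : ∀ i, 1 ≤ s i ∧ s i ≤ 4 := fun i => by
    by_cases h : i = 0
    · exact h ▸ hs0
    · exact ⟨(hs i h).1.le, (hs i h).2.le⟩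
  have hsubone : ∀ i : Fin 5, i - 1 + 1 = i := fun i => by abel
  have hsubtwo : ∀ i : Fin 5, i - 2 + 2 = i := fun i => by abel
  have ha' : ∀ i, o i + s i - o (i - 1) = 5 * a i := fun i => by
    have := ha (i - 1); rwa [hsubone] at this
  have hb' : ∀ i, n (i - 2) + s i - n i = 5 * b i := fun i => by
    have := hb (i - 2); rwa [hsubtwo] at this
  refine petersen_no_balanced a b (fun i => ?_) (fun i => ?_) ?_ (fun i => ?_) (fun i => ?_)
    (fun i => ?_) (fun i => ?_) (fun i => ?_) (fun i => ?_)
  · have h₁ := ha' i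
    have := ho i; have := ho (i - 1); have := hs' i
    have : (-1 : ℝ) < a i := by linarith
    have : (a i : ℝ) < 2 := by linarith
    norm_cast at *; omega
  · have h₁ := hb' i
    have := hn i; have := hn (i - 2); have := hs' i
    have : (-1 : ℝ) < b i := by linarith
    have : (b i : ℝ) < 2 := by linarith
    norm_cast at *; omega
  · have hshift : ∀ (f : Fin 5 → ℝ) c, ∑ i, f (i + c) = ∑ i, f i :=
      fun f c => Equiv.sum_comp (Equiv.addRight c) f
    have h₁ : ∑ i, (o (i + 1) + s (i + 1) - o i) = ∑ i, s i := by
      rw [Finset.sum_sub_distrib, Finset.sum_add_distrib, hshift o, hshift s]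
      ring
    have h₂ : ∑ i, (n i + s (i + 2) - n (i + 2)) = ∑ i, s i := by
      rw [Finset.sum_sub_distrib, Finset.sum_add_distrib, hshift n, hshift s]
      ring
    simp only [ha, hb, ← Finset.mul_sum] at h₁ h₂
    rw [hshift (fun i => (a i : ℝ))] at h₁
    rw [hshift (fun i => (b i : ℝ))] at h₂
    have : (∑ i, (a i : ℝ)) = ∑ i, (b i : ℝ) := by linarith
    exact_mod_cast this
  · have h₁ := ha' i; have h₂ := ha i; have h₃ := ha (i + 1)
    have := ho (i - 1); have := ho (i + 1 + 1)
    have := hs' i; have := hs' (i + 1); have := hs' (i + 1 + 1)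
    have e₁ : (0 : ℝ) < a i + a (i + 1) + a (i + 1 + 1) := by linarith
    have e₂ : (a i + a (i + 1) + a (i + 1 + 1) : ℝ) < 3 := by linarith
    exact ⟨by exact_mod_cast e₁, by exact_mod_cast e₂⟩
  · have h₁ := hb' i; have h₂ := hb i; have h₃ := hb (i + 2)
    have := hn (i - 2); have := hn (i + 2 + 2)
    have := hs' i; have := hs' (i + 2); have := hs' (i + 2 + 2)
    have e₁ : (0 : ℝ) < b i + b (i + 2) + b (i + 2 + 2) := by linarith
    have e₂ : (b i + b (i + 2) + b (i + 2 + 2) : ℝ) < 3 := by linarith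
    exact ⟨by exact_mod_cast e₁, by exact_mod_cast e₂⟩
  · have h₁ := ha' i; have h₂ := ha i; have h₃ := hb' i
    have := ho (i - 1); have := ho (i + 1); have := hs' (i + 1)
    have := hn i; have := hn (i - 2)
    have e₁ : (-1 : ℝ) < a i + a (i + 1) - b i := by linarith
    have e₂ : (a i + a (i + 1) - b i : ℝ) < 2 := by linarith
    exact ⟨by exact_mod_cast e₁, by exact_mod_cast e₂⟩
  · have h₁ := ha' i; have h₂ := ha i; have h₃ := hb' (i + 1)
    have := ho (i - 1); have := ho (i + 1); have := hs' i
    have := hn (i + 1); have := hn (i + 1 - 2)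
    have e₁ : (-1 : ℝ) < a i + a (i + 1) - b (i + 1) := by linarith
    have e₂ : (a i + a (i + 1) - b (i + 1) : ℝ) < 2 := by linarith
    exact ⟨by exact_mod_cast e₁, by exact_mod_cast e₂⟩
  · have h₁ := hb' i; have h₂ := hb i; have h₃ := ha' i
    have := hn (i - 2); have := hn (i + 2); have := hs' (i + 2)
    have := ho i; have := ho (i - 1)
    have e₁ : (-1 : ℝ) < b i + b (i + 2) - a i := by linarith
    have e₂ : (b i + b (i + 2) - a i : ℝ) < 2 := by linarith
    exact ⟨by exact_mod_cast e₁, by exact_mod_cast e₂⟩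
  · have h₁ := hb' i; have h₂ := hb i; have h₃ := ha' (i + 2)
    have := hn (i - 2); have := hn (i + 2); have := hs' i
    have := ho (i + 2); have := ho (i + 2 - 1)
    have e₁ : (-1 : ℝ) < b i + b (i + 2) - a (i + 2) := by linarith
    have e₂ : (b i + b (i + 2) - a (i + 2) : ℝ) < 2 := by linarith
    exact ⟨by exact_mod_cast e₁, by exact_mod_cast e₂⟩

namespace Multigraph

/-- The pairing of the boundary of `f` with a potential `p`. -/
def pairing {M : Type*} [AddCommGroup M] (G : Multigraph) (p : G.V → ℤ) (f : G.E → M) : M :=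
  ∑ e, (p (G.tgt e) - p (G.src e)) • f e

theorem isFlow_iff_pairing {M : Type*} [AddCommGroup M] (G : Multigraph) (f : G.E → M) :
    G.IsFlow f ↔ ∀ p : G.V → ℤ, G.pairing p f = 0 := by
  have key : ∀ (p : G.V → ℤ) (t : G.E → G.V), ∑ e, p (t e) • f e
      = ∑ v, p v • ∑ e, Set.indicator {e' : G.E | t e' = v} f e := fun p t => by
    simp only [Finset.smul_sum]
    rw [Finset.sum_comm]
    refine Finset.sum_congr rfl fun e _ => ?_
    rw [Finset.sum_eq_single (t e)]
    · simp
    · intro v _ hv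
      simp [Set.indicator, hv.symm]
    · simp
  simp only [pairing, sub_smul, Finset.sum_sub_distrib, key, sub_eq_zero]
  refine ⟨fun h p => Finset.sum_congr rfl fun v _ => by rw [h v], fun h v => ?_⟩
  simpa [Pi.single_apply, ite_smul] using h (Pi.single v 1)

/-- The capacity between `x` and `y` of `G` when the edge `e` carries values in `σ e`. -/
def cap (G : Multigraph) (x y : G.V) (σ : G.E → Set (AddCircle (5 : ℝ))) :
    Set (AddCircle (5 : ℝ)) :=
  {w | ∃ f : G.E → AddCircle (5 : ℝ), (∀ e, f e ∈ σ e) ∧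
    ∀ p : G.V → ℤ, G.pairing p f + (p y - p x) • w = 0}

theorem CP5_eq_cap (G : Multigraph) (x y : G.V) : G.CP5 x y = G.cap x y fun _ => arc 1 4 := by
  have key : ∀ f : Option G.E → AddCircle (5 : ℝ), (G.addEdge x y).IsFlow f ↔
      ∀ p : G.V → ℤ, G.pairing p (fun e => f (some e)) + (p y - p x) • f none = 0 := fun f => by
    refine (isFlow_iff_pairing (G.addEdge x y) f).trans (forall_congr' fun p => ?_)
    rw [add_comm]
    exact Eq.congr_left (Fintype.sum_option (α := G.E) _)
  ext w
  constructor
  · rintro ⟨f, hf, he, rfl⟩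
    exact ⟨fun e => f (some e), he, (key f).1 hf⟩
  · rintro ⟨f, he, hf⟩
    exact ⟨fun e => e.elim w f, (key _).2 hf, he, rfl⟩

theorem neg_mem_cap {G : Multigraph} {x y : G.V} {σ : G.E → Set (AddCircle (5 : ℝ))}
    (hσ : ∀ e, ∀ z ∈ σ e, -z ∈ σ e) {w : AddCircle (5 : ℝ)} (hw : w ∈ G.cap x y σ) :
    -w ∈ G.cap x y σ := by
  obtain ⟨f, hf, h⟩ := hw
  refine ⟨fun e => -f e, fun e => hσ e _ (hf e), fun p => ?_⟩
  have := h p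
  simp only [pairing, smul_neg, Finset.sum_neg_distrib] at this ⊢
  rw [← neg_add, this, neg_zero]

section Substitution

variable (H : Multigraph) (G : H.E → Multigraph) (a b : ∀ e, (G e).V)

/-- The position of a vertex of `G e` after `G e` has been substituted for the edge `e` of `H`;
the terminals `a e`, `b e` are identified with the target and the source of `e`. -/
noncomputable def substVertex (e : H.E) (v : (G e).V) :
    H.V ⊕ Σ e, {v : (G e).V // v ≠ a e ∧ v ≠ b e} :=
  if ha : v = a e then Sum.inl (H.tgt e)
  else if hb : v = b e then Sum.inl (H.src e) else Sum.inr ⟨e, v, ha, hb⟩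

/-- The graph obtained from `H` by substituting `G e` for each edge `e`. -/
noncomputable def subst : Multigraph where
  V := H.V ⊕ Σ e, {v : (G e).V // v ≠ a e ∧ v ≠ b e}
  E := Σ e, (G e).E
  src := fun i => substVertex H G a b i.1 ((G i.1).src i.2)
  tgt := fun i => substVertex H G a b i.1 ((G i.1).tgt i.2)

variable {H G a b}

theorem pairing_subst (f : (subst H G a b).E → AddCircle (5 : ℝ)) (q : (subst H G a b).V → ℤ) :
    (subst H G a b).pairing q f =
      ∑ e, (G e).pairing (fun v => q (substVertex H G a b e v)) fun i => f ⟨e, i⟩ :=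
  Fintype.sum_sigma _

theorem cap_subst (hab : ∀ e, a e ≠ b e) (x y : H.V) :
    (subst H G a b).cap (Sum.inl x) (Sum.inl y) (fun _ => arc 1 4) =
      H.cap x y fun e => (G e).cap (a e) (b e) fun _ => arc 1 4 := by
  have hva : ∀ e, substVertex H G a b e (a e) = Sum.inl (H.tgt e) := fun e => by
    simp [substVertex]
  have hvb : ∀ e, substVertex H G a b e (b e) = Sum.inl (H.src e) := fun e => by
    simp [substVertex, (hab e).symm]
  ext w
  constructor
  · rintro ⟨f, hf, h⟩
    have hzero : ∀ e (p : (G e).V → ℤ), p (a e) = 0 → p (b e) = 0 →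
        (G e).pairing p (fun i => f ⟨e, i⟩) = 0 := fun e p hpa hpb => by
      let q : (subst H G a b).V → ℤ := Sum.elim (fun _ => 0)
        fun v => if h : v.1 = e then p (h ▸ v.2.1) else 0
      have hq : ∀ v, q (substVertex H G a b e v) = p v := fun v => by
        by_cases ha : v = a e
        · simp [ha, hva, q, hpa]
        by_cases hb : v = b e
        · simp [hb, hvb, q, hpb]
        simp [substVertex, ha, hb, q]
      have hq' : ∀ e', e' ≠ e → ∀ v, q (substVertex H G a b e' v) = 0 := fun e' he' v => by
        simp only [substVertex]
        split_ifs <;> simp [q, he']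
      have := h q
      rw [pairing_subst, Finset.sum_eq_single e] at this
      · simpa [hq, q] using this
      · intro e' _ he'
        simp [hq' e' he', pairing]
      · simp
    let g : H.E → AddCircle (5 : ℝ) := fun e =>
      -(G e).pairing (fun v => if v = b e then 1 else 0) fun i => f ⟨e, i⟩
    have hg : ∀ e (p : (G e).V → ℤ),
        (G e).pairing p (fun i => f ⟨e, i⟩) + (p (b e) - p (a e)) • g e = 0 := fun e p => by
      have h₀ := hzero e (fun v => p v - p (a e) - (p (b e) - p (a e)) * if v = b e then 1 else 0)
        (by simp [hab e]) (by simp)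
      rw [← h₀]
      simp only [pairing, g, smul_neg, Finset.smul_sum, ← sub_eq_add_neg, smul_smul]
      rw [← Finset.sum_sub_distrib]
      refine Finset.sum_congr rfl fun i _ => ?_
      rw [← sub_smul]
      congr 1
      ring
    refine ⟨g, fun e => ⟨fun i => f ⟨e, i⟩, fun i => hf ⟨e, i⟩, hg e⟩, fun p => ?_⟩
    let q : (subst H G a b).V → ℤ := Sum.elim p fun _ => 0
    rw [← h q, pairing_subst, pairing]
    congr 1
    refine Finset.sum_congr rfl fun e _ => ?_
    have := hg e fun v => q (substVertex H G a b e v)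
    rw [hva, hvb] at this
    rw [eq_neg_of_add_eq_zero_left this, ← neg_smul, neg_sub]
    rfl
  · rintro ⟨g, hg, h⟩
    choose f hf hfg using hg
    refine ⟨fun i => f i.1 i.2, fun i => hf i.1 i.2, fun q => ?_⟩
    rw [← h fun v => q (Sum.inl v), pairing_subst, pairing]
    congr 1
    refine Finset.sum_congr rfl fun e _ => ?_
    have := hfg e fun v => q (substVertex H G a b e v)
    rw [hva, hvb] at this
    rw [eq_neg_of_add_eq_zero_left this, ← neg_smul, neg_sub]

end Substitution

end Multigraph

/-- The graphic subsets of `ℝ/5ℤ`. -/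
def IsGraphic (A : Set (AddCircle (5 : ℝ))) : Prop :=
  ∃ (G : Multigraph) (x y : G.V), x ≠ y ∧ G.CP5 x y = A

/-- Substituting generalised edges for the edges of a graph yields a generalised edge. -/
theorem IsGraphic.cap {H : Multigraph} {x y : H.V} (hxy : x ≠ y)
    {σ : H.E → Set (AddCircle (5 : ℝ))} (hσ : ∀ e, IsGraphic (σ e)) :
    IsGraphic (H.cap x y σ) := by
  choose G a b hab hG using hσ
  refine ⟨Multigraph.subst H G a b, Sum.inl x, Sum.inl y, Sum.inl_injective.ne hxy, ?_⟩
  simp only [Multigraph.CP5_eq_cap] at hG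
  exact (Multigraph.CP5_eq_cap _ _ _).trans
    ((Multigraph.cap_subst hab x y).trans (congrArg _ (funext hG)))

open scoped Pointwise

theorem IsGraphic.add {A B : Set (AddCircle (5 : ℝ))} (hA : IsGraphic A) (hB : IsGraphic B) :
    IsGraphic (A + B) := by
  let H : Multigraph := ⟨Fin 2, Fin 2, ![1, 1], ![0, 0]⟩
  have := IsGraphic.cap (H := H) (x := (0 : Fin 2)) (y := (1 : Fin 2)) (σ := ![A, B])
    (by decide) fun e => by fin_cases e <;> assumption
  convert this
  ext w
  have key : ∀ (p : Fin 2 → ℤ) (f : Fin 2 → AddCircle (5 : ℝ)),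
      H.pairing p f + (p 1 - p 0) • w = (p 1 - p 0) • (w - (f 0 + f 1)) := fun p f => by
    refine (congrArg (· + _) (Fin.sum_univ_two _)).trans ?_
    simp only [H, Matrix.cons_val_zero, Matrix.cons_val_one]
    module
  constructor
  · rintro ⟨u, hu, v, hv, rfl⟩
    refine ⟨![u, v], fun e => by fin_cases e <;> assumption, fun p => (key p _).trans ?_⟩
    simp
  · rintro ⟨f, hf, h⟩
    refine ⟨f (0 : Fin 2), hf (0 : Fin 2), f (1 : Fin 2), hf (1 : Fin 2), ?_⟩
    have := (key ![0, 1] f).symm.trans (h _)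
    simpa [sub_eq_zero, eq_comm] using this

theorem IsGraphic.inter {A B : Set (AddCircle (5 : ℝ))} (hA : IsGraphic A) (hB : IsGraphic B) :
    IsGraphic (A ∩ B) := by
  let H : Multigraph := ⟨Fin 3, Fin 2, ![1, 2], ![0, 1]⟩
  have := IsGraphic.cap (H := H) (x := (0 : Fin 3)) (y := (2 : Fin 3)) (σ := ![A, B])
    (by decide) fun e => by fin_cases e <;> assumption
  convert this
  ext w
  have key : ∀ (p : Fin 3 → ℤ) (f : Fin 2 → AddCircle (5 : ℝ)),
      H.pairing p f + (p 2 - p 0) • w =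
        (p 1 - p 0) • (w - f 0) + (p 2 - p 1) • (w - f 1) := fun p f => by
    refine (congrArg (· + _) (Fin.sum_univ_two _)).trans ?_
    simp only [H, Matrix.cons_val]
    module
  constructor
  · rintro ⟨hu, hv⟩
    refine ⟨fun _ => w, fun e => by fin_cases e <;> assumption, fun p => (key p _).trans ?_⟩
    simp
  · rintro ⟨f, hf, h⟩
    have h₀ := (key ![0, 1, 1] f).symm.trans (h _)
    have h₁ := (key ![0, 0, 1] f).symm.trans (h _)
    simp [sub_eq_zero] at h₀ h₁
    exact ⟨h₀ ▸ hf (0 : Fin 2), h₁ ▸ hf (1 : Fin 2)⟩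

/-- The set of values that can be passed through a Wheatstone bridge. -/
def bridge (A B C D F : Set (AddCircle (5 : ℝ))) : Set (AddCircle (5 : ℝ)) :=
  {w | ∃ t ∈ A, ∃ s ∈ C, w - t ∈ B ∧ t - s ∈ D ∧ w - t + s ∈ F}

theorem IsGraphic.bridge {A B C D F : Set (AddCircle (5 : ℝ))} (hA : IsGraphic A)
    (hB : IsGraphic B) (hC : IsGraphic C) (hD : IsGraphic D) (hF : IsGraphic F) :
    IsGraphic (bridge A B C D F) := by
  let H : Multigraph := ⟨Fin 4, Fin 5, ![0, 0, 1, 1, 2], ![1, 2, 2, 3, 3]⟩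
  have := IsGraphic.cap (H := H) (x := (3 : Fin 4)) (y := (0 : Fin 4)) (σ := ![A, B, C, D, F])
    (by decide) fun e => by fin_cases e <;> assumption
  convert this
  ext w
  have key : ∀ (p : Fin 4 → ℤ) (f : Fin 5 → AddCircle (5 : ℝ)),
      H.pairing p f + (p 0 - p 3) • w =
        p 0 • (w - f 0 - f 1) + p 1 • (f 0 - f 2 - f 3) + p 2 • (f 1 + f 2 - f 4)
          + p 3 • (f 3 + f 4 - w) := fun p f => by
    refine (congrArg (· + _) (Fin.sum_univ_five _)).trans ?_
    simp only [H, Matrix.cons_val]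
    module
  constructor
  · rintro ⟨t, ht, s, hs, hB, hD, hF⟩
    refine ⟨![t, w - t, s, t - s, w - t + s], fun e => by fin_cases e <;> assumption,
      fun p => (key p _).trans ?_⟩
    simp only [Matrix.cons_val]
    module
  · rintro ⟨f, hf, h⟩
    have h₀ := (key ![1, 0, 0, 0] f).symm.trans (h _)
    have h₁ := (key ![0, 1, 0, 0] f).symm.trans (h _)
    have h₂ := (key ![0, 0, 1, 0] f).symm.trans (h _)
    simp [sub_eq_zero] at h₀ h₁ h₂
    refine ⟨f (0 : Fin 5), hf (0 : Fin 5), f (2 : Fin 5), hf (2 : Fin 5), ?_, ?_, ?_⟩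
    · rw [h₀]
      exact hf (1 : Fin 5)
    · rw [h₁]
      exact hf (3 : Fin 5)
    · rw [h₀, h₂]
      exact hf (4 : Fin 5)

theorem exists_norm_coe_eq (x : ℝ) :
    ∃ k : ℤ, ‖(x : AddCircle (5 : ℝ))‖ = |x - 5 * k| ∧ |x - 5 * k| ≤ 5 / 2 := by
  refine ⟨round (5⁻¹ * x), ?_, ?_⟩
  · rw [AddCircle.norm_eq, mul_comm]
  · have := abs_sub_round (5⁻¹ * x)
    rw [abs_le] at this ⊢
    constructor <;> linarith

theorem exists_coe_eq (z : AddCircle (5 : ℝ)) :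
    ∃ x : ℝ, (x : AddCircle (5 : ℝ)) = z ∧ ‖z‖ = |x| ∧ |x| ≤ 5 / 2 := by
  induction z using QuotientAddGroup.induction_on with | H x
  obtain ⟨k, h, h'⟩ := exists_norm_coe_eq x
  refine ⟨x - 5 * k, ?_, h, h'⟩
  rw [← sub_eq_zero, ← AddCircle.coe_sub, AddCircle.coe_eq_zero_iff]
  exact ⟨-k, by simp; ring⟩

theorem mem_arc_one_four_iff_exists {z : AddCircle (5 : ℝ)} :
    z ∈ arc 1 4 ↔ ∃ x : ℝ, (1 < x ∧ x < 4) ∧ (x : AddCircle (5 : ℝ)) = z := by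
  have h4 : arcEnd 1 4 = 4 := rfl
  simp [arc, h4]

theorem exists_coe_eq_of_le_norm {c : ℝ} {z : AddCircle (5 : ℝ)} (hz : c ≤ ‖z‖) :
    ∃ x : ℝ, (c ≤ x ∧ x ≤ 5 - c) ∧ (x : AddCircle (5 : ℝ)) = z := by
  obtain ⟨x, rfl, h, h'⟩ := exists_coe_eq z
  have hc := hz.trans (h ▸ h')
  rw [h, le_abs] at hz
  rw [abs_le] at h'
  rcases hz with hz | hz
  · exact ⟨x, by constructor <;> linarith, rfl⟩
  · exact ⟨x + 5, by constructor <;> linarith, AddCircle.coe_add_period 5 x⟩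

theorem mem_arc_one_four {z : AddCircle (5 : ℝ)} : z ∈ arc 1 4 ↔ 1 < ‖z‖ := by
  rw [mem_arc_one_four_iff_exists]
  constructor
  · rintro ⟨x, hx, rfl⟩
    obtain ⟨k, h, -⟩ := exists_norm_coe_eq x
    rw [h, lt_abs]
    rcases le_or_gt k 0 with hk | hk
    · have : (k : ℝ) ≤ 0 := by exact_mod_cast hk
      left; linarith
    · have : (1 : ℝ) ≤ k := by exact_mod_cast hk
      right; linarith
  · intro hz
    obtain ⟨x, hx, h⟩ := exists_coe_eq_of_le_norm le_rfl (z := z)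
    exact ⟨x, by constructor <;> linarith, h⟩

theorem neg_mem_arc_one_four (z : AddCircle (5 : ℝ)) (hz : z ∈ arc 1 4) : -z ∈ arc 1 4 := by
  rw [mem_arc_one_four, norm_neg]
  exact mem_arc_one_four.1 hz

theorem norm_coe_of_abs_le {x : ℝ} (hx : |x| ≤ 5 / 2) : ‖(x : AddCircle (5 : ℝ))‖ = |x| :=
  (AddCircle.norm_coe_eq_abs_iff 5 (by norm_num)).2
    (by rwa [abs_of_pos (by norm_num : (0 : ℝ) < 5)])

theorem isGraphic_one_lt_norm : IsGraphic {z | 1 < ‖z‖} := by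
  let H : Multigraph := ⟨Fin 2, Fin 1, ![1], ![0]⟩
  refine ⟨H, (0 : Fin 2), (1 : Fin 2), by decide, ?_⟩
  rw [Multigraph.CP5_eq_cap]
  ext w
  have key : ∀ (p : Fin 2 → ℤ) (f : Fin 1 → AddCircle (5 : ℝ)),
      H.pairing p f + (p 1 - p 0) • w = (p 1 - p 0) • (w - f 0) := fun p f => by
    refine (congrArg (· + _) (Fin.sum_univ_one _)).trans ?_
    simp only [H, Matrix.cons_val_zero]
    module
  constructor
  · rintro ⟨f, hf, h⟩
    have := (key ![0, 1] f).symm.trans (h _)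
    simp [sub_eq_zero] at this
    rw [this]
    exact mem_arc_one_four.1 (hf (0 : Fin 1))
  · intro hw
    exact ⟨fun _ => w, fun _ => mem_arc_one_four.2 hw, fun p => (key p _).trans (by simp)⟩

/-- The arc `(4, 1)` is the capacity of the Petersen graph minus an edge. -/
theorem isGraphic_norm_lt_one : IsGraphic {z | ‖z‖ < 1} := by
  let H : Multigraph := ⟨Fin 10, Fin 14, ![0, 1, 2, 3, 4, 1, 2, 3, 4, 5, 6, 7, 8, 9],
    ![1, 2, 3, 4, 0, 6, 7, 8, 9, 7, 8, 9, 5, 6]⟩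
  refine ⟨H, (0 : Fin 10), (5 : Fin 10), by decide, ?_⟩
  rw [Multigraph.CP5_eq_cap]
  have key : ∀ (w : AddCircle (5 : ℝ)) (p : Fin 10 → ℤ) (f : Fin 14 → AddCircle (5 : ℝ)),
      H.pairing p f + (p 5 - p 0) • w =
        p 0 • -(f 0 + w - f 4) - p 1 • (f 1 + f 5 - f 0) - p 2 • (f 2 + f 6 - f 1)
          - p 3 • (f 3 + f 7 - f 2) - p 4 • (f 4 + f 8 - f 3) + p 5 • (f 12 + w - f 9)
          + p 6 • (f 13 + f 5 - f 10) + p 7 • (f 9 + f 6 - f 11) + p 8 • (f 10 + f 7 - f 12)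
          + p 9 • (f 11 + f 8 - f 13) := fun w p f => by
    refine (congrArg (· + _) (Fin.sum_univ_def _)).trans ?_
    simp only [H, List.finRange_succ, List.map_cons, List.sum_cons, Matrix.cons_val]
    simp
    module
  have hcoe : ∀ x y z : ℝ, (x + y - z : AddCircle (5 : ℝ)) = 0 ↔ ∃ k : ℤ, x + y - z = 5 * k :=
    fun x y z => by
      rw [← AddCircle.coe_add, ← AddCircle.coe_sub, AddCircle.coe_eq_zero_iff]
      simp [eq_comm, mul_comm]
  ext w
  constructor
  · rintro ⟨f, hf, h⟩
    by_contra hw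
    obtain ⟨v, hv, rfl⟩ := exists_coe_eq_of_le_norm (not_lt.1 hw)
    choose r hr hrf using fun e : Fin 14 => mem_arc_one_four_iff_exists.1 (hf e)
    obtain rfl : (fun e => (r e : AddCircle (5 : ℝ))) = f := funext hrf
    have k₀ := (key v ![-1, 0, 0, 0, 0, 0, 0, 0, 0, 0] _).symm.trans (h _)
    have k₁ := (key v ![0, -1, 0, 0, 0, 0, 0, 0, 0, 0] _).symm.trans (h _)
    have k₂ := (key v ![0, 0, -1, 0, 0, 0, 0, 0, 0, 0] _).symm.trans (h _)
    have k₃ := (key v ![0, 0, 0, -1, 0, 0, 0, 0, 0, 0] _).symm.trans (h _)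
    have k₄ := (key v ![0, 0, 0, 0, -1, 0, 0, 0, 0, 0] _).symm.trans (h _)
    have k₅ := (key v ![0, 0, 0, 0, 0, 1, 0, 0, 0, 0] _).symm.trans (h _)
    have k₆ := (key v ![0, 0, 0, 0, 0, 0, 1, 0, 0, 0] _).symm.trans (h _)
    have k₇ := (key v ![0, 0, 0, 0, 0, 0, 0, 1, 0, 0] _).symm.trans (h _)
    have k₈ := (key v ![0, 0, 0, 0, 0, 0, 0, 0, 1, 0] _).symm.trans (h _)
    have k₉ := (key v ![0, 0, 0, 0, 0, 0, 0, 0, 0, 1] _).symm.trans (h _)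
    simp only [Matrix.cons_val, zero_smul, one_smul, neg_smul, neg_neg, sub_zero,
      zero_add, add_zero, sub_neg_eq_add, hcoe] at k₀ k₁ k₂ k₃ k₄ k₅ k₆ k₇ k₈ k₉
    have ha : ∀ i : Fin 5, ∃ k : ℤ, ![r 0, r 1, r 2, r 3, r 4] (i + 1)
        + ![v, r 5, r 6, r 7, r 8] (i + 1) - ![r 0, r 1, r 2, r 3, r 4] i = 5 * k := fun i => by
      fin_cases i <;> assumption
    have hb : ∀ i : Fin 5, ∃ k : ℤ, ![r 9, r 10, r 11, r 12, r 13] i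
        + ![v, r 5, r 6, r 7, r 8] (i + 2) - ![r 9, r 10, r 11, r 12, r 13] (i + 2) = 5 * k :=
      fun i => by fin_cases i <;> assumption
    choose a ha using ha
    choose b hb using hb
    refine petersen_no_flow (s := ![v, r 5, r 6, r 7, r 8]) (a := fun i => a (i - 1))
      (b := fun i => b (i - 2)) (fun i => ?_)
      ⟨hv.1, show v ≤ 4 by linarith⟩ (fun i hi => ?_) (fun i => ?_)
      (fun i => by simpa using ha i) (fun i => by simpa using hb i)
    · fin_cases i <;> exact hr _
    · fin_cases i
      · exact absurd rfl hi
      all_goals exact hr _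
    · fin_cases i <;> exact hr _
  · intro hw
    obtain ⟨x, rfl, h, h'⟩ := exists_coe_eq w
    rw [Set.mem_ofPred_eq, h] at hw
    suffices hpos : ∀ x : ℝ, 0 ≤ x → x < 1 → (x : AddCircle (5 : ℝ)) ∈
        H.cap (0 : Fin 10) (5 : Fin 10) fun _ => arc 1 4 by
      rcases le_total 0 x with hx | hx
      · exact hpos x hx (abs_lt.1 hw).2
      · have := Multigraph.neg_mem_cap (fun _ => neg_mem_arc_one_four)
          (hpos (-x) (by linarith) (by linarith [(abs_lt.1 hw).1]))
        rwa [AddCircle.coe_neg, neg_neg] at this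
    intro x hx hx'
    let g : Fin 14 → ℝ := ![5 / 4 - x / 4, 5 / 2 - x / 2, 5 / 4 - x / 4, 5 / 2 + x / 2,
      5 / 4 + 3 * x / 4, 15 / 4 + x / 4, 5 / 4 - x / 4, 15 / 4 - 3 * x / 4, 5 / 4 - x / 4,
      5 / 4 + 3 * x / 4, 5 / 2 + x / 2, 5 / 2 + x / 2, 5 / 4 - x / 4, 15 / 4 + x / 4]
    have hg : ∀ e, 1 < g e ∧ g e < 4 := by
      simp only [g, Fin.forall_fin_succ, Matrix.cons_val_zero,
        Matrix.cons_val_succ, IsEmpty.forall_iff, and_true]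
      refine ⟨?_, ?_, ?_, ?_, ?_, ?_, ?_, ?_, ?_, ?_, ?_, ?_, ?_, ?_⟩ <;>
        constructor <;> linarith
    refine ⟨fun e : Fin 14 => (g e : AddCircle (5 : ℝ)),
      fun e => mem_arc_one_four_iff_exists.2 ⟨_, hg e, rfl⟩, fun p => (key x p _).trans ?_⟩
    have hzero : ∀ (a b c : ℝ) (k : ℤ), a + b - c = 5 * k → (a + b - c : AddCircle (5 : ℝ)) = 0 :=
      fun a b c k hk => (hcoe a b c).2 ⟨k, hk⟩
    rw [hzero (g 0) x (g 4) 0 (by simp only [g, Matrix.cons_val]; push_cast; ring),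
        hzero (g 1) (g 5) (g 0) 1 (by simp only [g, Matrix.cons_val]; push_cast; ring),
        hzero (g 2) (g 6) (g 1) 0 (by simp only [g, Matrix.cons_val]; push_cast; ring),
        hzero (g 3) (g 7) (g 2) 1 (by simp only [g, Matrix.cons_val]; push_cast; ring),
        hzero (g 4) (g 8) (g 3) 0 (by simp only [g, Matrix.cons_val]; push_cast; ring),
        hzero (g 12) x (g 9) 0 (by simp only [g, Matrix.cons_val]; push_cast; ring),
        hzero (g 13) (g 5) (g 10) 1 (by simp only [g, Matrix.cons_val]; push_cast; ring),
        hzero (g 9) (g 6) (g 11) 0 (by simp only [g, Matrix.cons_val]; push_cast; ring),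
        hzero (g 10) (g 7) (g 12) 1 (by simp only [g, Matrix.cons_val]; push_cast; ring),
        hzero (g 11) (g 8) (g 13) 0 (by simp only [g, Matrix.cons_val]; push_cast; ring)]
    simp

theorem exists_norm_coe_eq_of_abs_le {x : ℝ} (hx : |x| ≤ 5) :
    ∃ m : ℝ, (m = 0 ∨ m = 5 ∨ m = -5) ∧ ‖(x : AddCircle (5 : ℝ))‖ = |x - m| ∧
      |x - m| ≤ 5 / 2 := by
  obtain ⟨k, h, h'⟩ := exists_norm_coe_eq x
  refine ⟨5 * k, ?_, h, h'⟩
  rw [abs_le] at hx h'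
  have h₁ : (k : ℝ) < 2 := by linarith
  have h₂ : (-2 : ℝ) < k := by linarith
  have : -2 < k ∧ k < 2 := ⟨by exact_mod_cast h₂, by exact_mod_cast h₁⟩
  obtain rfl | rfl | rfl : k = 0 ∨ k = 1 ∨ k = -1 := by omega
  all_goals norm_num

theorem isGraphic_of_norm_add {p q u : ℝ → Prop} (hp : IsGraphic {z | p ‖z‖})
    (hq : IsGraphic {z | q ‖z‖})
    (h₁ : ∀ x y m : ℝ, m = 0 ∨ m = 5 ∨ m = -5 → |x| ≤ 5 / 2 → |y| ≤ 5 / 2 →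
      |x + y - m| ≤ 5 / 2 → p |x| → q |y| → u |x + y - m|)
    (h₂ : ∀ x, 0 ≤ x → x ≤ 5 / 2 → u x → ∃ y z : ℝ, (y + z = x ∨ y + z = x - 5) ∧
      |y| ≤ 5 / 2 ∧ |z| ≤ 5 / 2 ∧ p |y| ∧ q |z|) :
    IsGraphic {z | u ‖z‖} := by
  convert hp.add hq using 1
  ext w
  symm
  constructor
  · rintro ⟨a, ha, b, hb, rfl⟩
    obtain ⟨x, rfl, hx, hx'⟩ := exists_coe_eq a
    obtain ⟨y, rfl, hy, hy'⟩ := exists_coe_eq b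
    obtain ⟨m, hm, h, h'⟩ := exists_norm_coe_eq_of_abs_le
      ((abs_add_le x y).trans (by linarith : |x| + |y| ≤ 5))
    simp only [Set.mem_ofPred_eq, ← AddCircle.coe_add, hx, hy, h] at ha hb ⊢
    exact h₁ x y m hm hx' hy' h' ha hb
  · intro hw
    obtain ⟨x, rfl, hx, hx'⟩ := exists_coe_eq w
    rw [Set.mem_ofPred_eq, hx] at hw
    obtain ⟨y, z, hyz, hy, hz, hp, hq⟩ := h₂ |x| (abs_nonneg x) hx' hw
    rw [← norm_coe_of_abs_le hy] at hp
    rw [← norm_coe_of_abs_le hz] at hq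
    have hsum : (y + z : AddCircle (5 : ℝ)) = |x| := by
      rcases hyz with h | h
      · rw [← AddCircle.coe_add, h]
      · rw [← AddCircle.coe_add, h, AddCircle.coe_sub, AddCircle.coe_period, sub_zero]
    rcases abs_choice x with h | h
    · exact ⟨y, hp, z, hq, hsum.trans (by rw [h])⟩
    · refine ⟨-y, by simpa using hp, -z, by simpa using hq, ?_⟩
      beta_reduce
      rw [← neg_add, hsum, h, AddCircle.coe_neg, neg_neg]

theorem isGraphic_norm_lt_two : IsGraphic {z | ‖z‖ < 2} := by
  refine isGraphic_of_norm_add (p := (· < 1)) (q := (· < 1)) (u := (· < 2))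
    isGraphic_norm_lt_one isGraphic_norm_lt_one ?_ ?_
  · intro x y m hm hx hy h hp hq
    simp only [abs_lt, abs_le] at *
    rcases hm with rfl | rfl | rfl <;> constructor <;> linarith
  · intro x hx hx' hu
    refine ⟨x / 2, x / 2, Or.inl (by ring), ?_⟩
    rw [abs_of_nonneg (by linarith)]
    refine ⟨?_, ?_, ?_, ?_⟩ <;> linarith

theorem isGraphic_norm_ne_zero : IsGraphic {z | ‖z‖ ≠ 0} := by
  refine isGraphic_of_norm_add (p := (· < 1)) (q := (1 < ·)) (u := (· ≠ 0))
    isGraphic_norm_lt_one isGraphic_one_lt_norm ?_ ?_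
  · intro x y m hm hx hy h hp hq
    simp only [abs_lt, abs_le, lt_abs, ne_eq, abs_eq_zero] at *
    rcases hm with rfl | rfl | rfl <;> rcases hq with hq | hq <;> intro h <;> linarith
  · intro x hx hx' hu
    have : 0 < x := lt_of_le_of_ne hx hu.symm
    simp only [abs_lt, abs_le, lt_abs]
    rcases le_or_gt x 1 with h | h
    · refine ⟨-1 + x / 2, 1 + x / 2, Or.inl (by ring), ⟨?_, ?_⟩, ⟨?_, ?_⟩, ⟨?_, ?_⟩, Or.inl ?_⟩ <;>
        linarith
    · refine ⟨0, x, Or.inl (by ring), ⟨?_, ?_⟩, ⟨?_, ?_⟩, ⟨?_, ?_⟩, Or.inl ?_⟩ <;> linarith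

theorem isGraphic_univ : IsGraphic Set.univ := by
  have : IsGraphic {z : AddCircle (5 : ℝ) | True} := by
    refine isGraphic_of_norm_add (p := (1 < ·)) (q := (1 < ·)) (u := fun _ => True)
      isGraphic_one_lt_norm isGraphic_one_lt_norm
      (fun _ _ _ _ _ _ _ _ _ => trivial) fun x hx hx' _ => ?_
    simp only [abs_le, lt_abs]
    rcases le_or_gt x 1 with h | h
    · refine ⟨-5 / 4, x + 5 / 4, Or.inl (by ring), ⟨?_, ?_⟩, ⟨?_, ?_⟩, Or.inr ?_, Or.inl ?_⟩ <;>
        linarith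
    · refine ⟨(x - 5) / 2, (x - 5) / 2, Or.inr (by ring), ⟨?_, ?_⟩, ⟨?_, ?_⟩, Or.inr ?_,
        Or.inr ?_⟩ <;> linarith
  simpa using this

theorem isGraphic_one_lt_norm_lt_two : IsGraphic {z | 1 < ‖z‖ ∧ ‖z‖ < 2} :=
  isGraphic_one_lt_norm.inter isGraphic_norm_lt_two

theorem isGraphic_norm_ne_one : IsGraphic {z | ‖z‖ ≠ 1} := by
  refine isGraphic_of_norm_add (p := fun r => 1 < r ∧ r < 2) (q := fun r => 1 < r ∧ r < 2)
    (u := (· ≠ 1)) isGraphic_one_lt_norm_lt_two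
    isGraphic_one_lt_norm_lt_two ?_ ?_
  · intro x y m hm hx hy h hp hq
    simp only [abs_lt, abs_le, lt_abs, ne_eq, abs_eq zero_le_one] at *
    obtain ⟨hp, hp₁, hp₂⟩ := hp
    obtain ⟨hq, hq₁, hq₂⟩ := hq
    rcases hm with rfl | rfl | rfl <;> rcases hp with hp | hp <;> rcases hq with hq | hq <;>
      rintro (h | h) <;> linarith
  · intro x hx hx' hu
    simp only [abs_lt, abs_le, lt_abs]
    rcases lt_or_gt_of_ne hu with h | h
    · refine ⟨3 / 2 + x / 2, x / 2 - 3 / 2, Or.inl (by ring), ⟨?_, ?_⟩, ⟨?_, ?_⟩,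
        ⟨Or.inl ?_, ?_, ?_⟩, Or.inr ?_, ?_, ?_⟩ <;> linarith
    · refine ⟨(x - 5) / 2, (x - 5) / 2, Or.inr (by ring), ⟨?_, ?_⟩, ⟨?_, ?_⟩,
        ⟨Or.inr ?_, ?_, ?_⟩, Or.inr ?_, ?_, ?_⟩ <;> linarith

theorem isGraphic_of_norm_bridge {p u : ℝ → Prop} (hp : IsGraphic {z | p ‖z‖})
    (h₁ : ∀ t s q l m : ℝ, l = 0 ∨ l = 5 ∨ l = -5 → m = 0 ∨ m = 5 ∨ m = -5 →
      |t| < 1 → |s| < 1 → |q| < 2 → 1 < |t - s| → |q + s - l| ≤ 5 / 2 → p |q + s - l| →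
      |q + t - m| ≤ 5 / 2 → u |q + t - m|)
    (h₂ : ∀ x, 0 ≤ x → x ≤ 5 / 2 → u x → ∃ t s q : ℝ, q + t = x ∧ |t| < 1 ∧ |s| < 1 ∧ |q| < 2 ∧
      1 < |t - s| ∧ |t - s| < 2 ∧ p ‖((q + s : ℝ) : AddCircle (5 : ℝ))‖) :
    IsGraphic {z | u ‖z‖} := by
  convert isGraphic_norm_lt_one.bridge isGraphic_norm_lt_two isGraphic_norm_lt_one
    isGraphic_one_lt_norm_lt_two hp using 1
  ext w
  symm
  constructor
  · rintro ⟨a, ha, b, hb, hc, hab, hp⟩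
    obtain ⟨c, rfl⟩ : ∃ c, w = c + a := ⟨w - a, by abel⟩
    rw [add_sub_cancel_right] at hc hp
    obtain ⟨t, rfl, ht, ht'⟩ := exists_coe_eq a
    obtain ⟨s, rfl, hs, hs'⟩ := exists_coe_eq b
    obtain ⟨q, rfl, hq, hq'⟩ := exists_coe_eq c
    simp only [Set.mem_ofPred_eq, ← AddCircle.coe_add, ← AddCircle.coe_sub, ht, hs, hq]
      at ha hb hc hp hab ⊢
    obtain ⟨l, hl, hql, hql'⟩ := exists_norm_coe_eq_of_abs_le
      ((abs_add_le q s).trans (by linarith : |q| + |s| ≤ 5))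
    obtain ⟨m, hm, hqm, hqm'⟩ := exists_norm_coe_eq_of_abs_le
      ((abs_add_le q t).trans (by linarith : |q| + |t| ≤ 5))
    rw [norm_coe_of_abs_le ((abs_sub t s).trans (by linarith))] at hab
    rw [hql] at hp
    rw [hqm]
    exact h₁ t s q l m hl hm ha hb hc hab.1 hql' hp hqm'
  · intro hw
    obtain ⟨x, rfl, hx, hx'⟩ := exists_coe_eq w
    rw [Set.mem_ofPred_eq, hx] at hw
    obtain ⟨t, s, q, hqt, ht, hs, hq, hts, hts', hp⟩ := h₂ |x| (abs_nonneg x) hx' hw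
    rw [← norm_coe_of_abs_le (by linarith)] at ht hs hq hts hts'
    rcases abs_choice x with h | h
    · refine ⟨t, ht, s, hs, ?_⟩
      rw [← h, ← hqt, AddCircle.coe_add, add_sub_cancel_right, ← AddCircle.coe_add,
        ← AddCircle.coe_sub]
      exact ⟨hq, ⟨hts, hts'⟩, hp⟩
    · refine ⟨-t, by simpa using ht, -s, by simpa using hs, ?_⟩
      have hx : (x : AddCircle (5 : ℝ)) = -q + -t := by
        rw [← neg_add, ← AddCircle.coe_add, hqt, h, AddCircle.coe_neg, neg_neg]
      rw [hx, add_sub_cancel_right, ← neg_add, ← neg_sub', ← AddCircle.coe_add,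
        ← AddCircle.coe_sub]
      simp only [Set.mem_ofPred_eq, norm_neg]
      exact ⟨hq, ⟨hts, hts'⟩, hp⟩

theorem isGraphic_norm_lt_one_or_two_lt : IsGraphic {z | ‖z‖ < 1 ∨ 2 < ‖z‖} := by
  refine isGraphic_of_norm_bridge (p := fun r => 1 < r ∧ r < 2) (u := fun r => r < 1 ∨ 2 < r)
    isGraphic_one_lt_norm_lt_two ?_ ?_
  · intro t s q l m hl hm ht hs hq hts hl' hp hm'
    by_contra! hu
    rcases hl with rfl | rfl | rfl <;> rcases hm with rfl | rfl | rfl <;>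
      simp only [abs_lt, abs_le, lt_abs, le_abs] at * <;>
      rcases hts with hts | hts <;> rcases hp with ⟨hp | hp, hp'⟩ <;>
      rcases hu with ⟨hu | hu, hu'⟩ <;>
      linarith
  · intro x hx hx' hu
    rcases hu with hu | hu
    · refine ⟨(1 + x) / 2, -1 + (1 - x) / 4, -(1 - x) / 2, by ring, ?_⟩
      rw [norm_coe_of_abs_le (abs_le.2 (by constructor <;> linarith))]
      simp only [abs_lt, lt_abs]
      refine ⟨⟨?_, ?_⟩, ⟨?_, ?_⟩, ⟨?_, ?_⟩, Or.inl ?_, ⟨?_, ?_⟩, Or.inr ?_, ?_, ?_⟩ <;> linarith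
    · refine ⟨(x - 1) / 2, -1 / 2, (x + 1) / 2, by ring, ?_⟩
      rw [norm_coe_of_abs_le (abs_le.2 (by constructor <;> linarith))]
      simp only [abs_lt, lt_abs]
      refine ⟨⟨?_, ?_⟩, ⟨?_, ?_⟩, ⟨?_, ?_⟩, Or.inl ?_, ⟨?_, ?_⟩, Or.inl ?_, ?_, ?_⟩ <;> linarith

theorem isGraphic_norm_ne_two : IsGraphic {z | ‖z‖ ≠ 2} := by
  refine isGraphic_of_norm_bridge (p := (1 < ·)) (u := (· ≠ 2)) isGraphic_one_lt_norm ?_ ?_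
  · intro t s q l m hl hm ht hs hq hts hl' hp hm' hu
    rw [abs_eq zero_le_two] at hu
    rcases hl with rfl | rfl | rfl <;> rcases hm with rfl | rfl | rfl <;>
      simp only [abs_lt, abs_le, lt_abs] at * <;>
      rcases hts with hts | hts <;> rcases hp with hp | hp <;> rcases hu with hu | hu <;>
      linarith
  · intro x hx hx' hu
    rcases lt_or_ge x 1 with h | h
    · refine ⟨(1 + x) / 2, -1 + (1 - x) / 4, -(1 - x) / 2, by ring, ?_⟩
      rw [norm_coe_of_abs_le (abs_le.2 (by constructor <;> linarith))]
      simp only [abs_lt, lt_abs]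
      refine ⟨⟨?_, ?_⟩, ⟨?_, ?_⟩, ⟨?_, ?_⟩, Or.inl ?_, ⟨?_, ?_⟩, Or.inr ?_⟩ <;> linarith
    rcases lt_or_gt_of_ne hu with h' | h'
    · refine ⟨(x - 2) / 2, (2 + x) / 4, (2 + x) / 2, by ring, ?_⟩
      obtain ⟨m, hm, hn, -⟩ := exists_norm_coe_eq_of_abs_le (x := (2 + x) / 2 + (2 + x) / 4)
        (abs_le.2 (by constructor <;> linarith))
      rw [hn]
      simp only [abs_lt, lt_abs]
      refine ⟨⟨?_, ?_⟩, ⟨?_, ?_⟩, ⟨?_, ?_⟩, Or.inr ?_, ⟨?_, ?_⟩, ?_⟩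
      rotate_right
      · rcases hm with rfl | rfl | rfl
        · left; linarith
        · right; linarith
        · left; linarith
      all_goals linarith
    · refine ⟨(x - 1) / 2, -1 / 2, (x + 1) / 2, by ring, ?_⟩
      rw [norm_coe_of_abs_le (abs_le.2 (by constructor <;> linarith))]
      simp only [abs_lt, lt_abs]
      refine ⟨⟨?_, ?_⟩, ⟨?_, ?_⟩, ⟨?_, ?_⟩, Or.inl ?_, ⟨?_, ?_⟩, Or.inl ?_⟩ <;> linarith

theorem IsGraphic.iInter {ι : Type*} [Finite ι] {M : ι → Set (AddCircle (5 : ℝ))}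
    (hM : ∀ i, IsGraphic (M i)) : IsGraphic (⋂ i, M i) := by
  have := Fintype.ofFinite ι
  have key : ∀ s : Finset ι, IsGraphic (⋂ i ∈ s, M i) := fun s => by
    induction s using Finset.induction with
    | empty => simpa using isGraphic_univ
    | insert i s _ ih => simpa [Finset.set_biInter_insert] using (hM i).inter ih
  simpa using key Finset.univ

/-- A union of open integer arcs containing `x` contains the open star of `x`. -/
theorem mem_of_mem_iUnion_arc {s : Set (ℤ × ℤ)} {x y : ℝ}
    (hx : (x : AddCircle (5 : ℝ)) ∈ ⋃ p ∈ s, arc p.1 p.2) (hl : ∀ n : ℤ, n < x → n < y)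
    (hr : ∀ n : ℤ, x < n → y < n) : (y : AddCircle (5 : ℝ)) ∈ ⋃ p ∈ s, arc p.1 p.2 := by
  simp only [Set.mem_iUnion] at hx ⊢
  obtain ⟨p, hp, x', ⟨h₁, h₂⟩, hx'⟩ := hx
  beta_reduce at hx'
  rw [← sub_eq_zero, ← AddCircle.coe_sub, AddCircle.coe_eq_zero_iff] at hx'
  obtain ⟨k, hk⟩ := hx'
  rw [zsmul_eq_mul] at hk
  have h₃ := hl (p.1 - k * 5) (by push_cast; linarith)
  have h₄ := hr (arcEnd p.1 p.2 - k * 5) (by push_cast; linarith)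
  push_cast at h₃ h₄
  refine ⟨p, hp, y + k * 5, ⟨by linarith, by linarith⟩, ?_⟩
  beta_reduce
  rw [← sub_eq_zero, ← AddCircle.coe_sub, AddCircle.coe_eq_zero_iff]
  exact ⟨k, by simp⟩

/-- every element of `SI_5` is graphic, i.e. it is the open
5-capacity of some generalised edge; hence `GI_5 = SI_5`. -/
theorem every_SI5_graphic :
    ∀ A ∈ SI5, ∃ (G : Multigraph) (x y : G.V), x ≠ y ∧ G.CP5 x y = A := by
  rintro A ⟨hsymm, s, hs⟩
  let M : Fin 6 → Set (AddCircle (5 : ℝ)) := ![{z | ‖z‖ ≠ 0}, {z | 1 < ‖z‖}, {z | ‖z‖ ≠ 1},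
    {z | ‖z‖ < 1 ∨ 2 < ‖z‖}, {z | ‖z‖ ≠ 2}, {z | ‖z‖ < 2}]
  have hM : ∀ i, IsGraphic (M i) := fun i => by
    fin_cases i
    exacts [isGraphic_norm_ne_zero, isGraphic_one_lt_norm, isGraphic_norm_ne_one,
      isGraphic_norm_lt_one_or_two_lt, isGraphic_norm_ne_two, isGraphic_norm_lt_two]
  have hnorm : ∀ z, z ∈ A ↔ (‖z‖ : AddCircle (5 : ℝ)) ∈ A := fun z => by
    obtain ⟨x, rfl, h, -⟩ := exists_coe_eq z
    rcases abs_choice x with h' | h' <;> rw [h, h']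
    rw [AddCircle.coe_neg]
    exact hsymm _
  have hsep : ∀ w ∉ A, ∃ i, A ⊆ M i ∧ w ∉ M i := fun w hw => by
    have hle : ∀ z : AddCircle (5 : ℝ), ‖z‖ ≤ 5 / 2 := fun z => by
      obtain ⟨x, -, h, h'⟩ := exists_coe_eq z
      rwa [h]
    have hstar : ∀ z ∈ A, (∀ n : ℤ, n < ‖z‖ → n < ‖w‖) → (∀ n : ℤ, ‖z‖ < n → ‖w‖ < n) → False :=
      fun z hz hl hr => hw ((hnorm w).2 (hs ▸ mem_of_mem_iUnion_arc (hs ▸ (hnorm z).1 hz) hl hr))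
    have hcell : ∀ (k : ℤ), ∀ z ∈ A, k ≤ ‖z‖ → ‖z‖ ≤ k + 1 → k < ‖w‖ → ‖w‖ < k + 1 → False :=
      fun k z hz h₁ h₂ h₃ h₄ => hstar z hz
        (fun n hn => by
          have : n < k + 1 := by exact_mod_cast hn.trans_le h₂
          exact lt_of_le_of_lt (by exact_mod_cast Int.lt_add_one_iff.1 this) h₃)
        (fun n hn => by
          have : k < n := by exact_mod_cast h₁.trans_lt hn
          exact lt_of_lt_of_le h₄ (by exact_mod_cast this))
    have hpoint : ∀ z ∈ A, ‖z‖ ≠ ‖w‖ := fun z hz h =>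
      hstar z hz (fun n hn => h ▸ hn) (fun n hn => h ▸ hn)
    have h₀ := norm_nonneg w
    have h₅ := hle w
    rcases h₀.eq_or_lt with h | h
    · exact ⟨0, fun z hz => (hpoint z hz).trans_eq h.symm, fun h' => h' h.symm⟩
    rcases lt_trichotomy ‖w‖ 1 with h₁ | h₁ | h₁
    · refine ⟨1, fun z hz => ?_, fun h' => lt_asymm h₁ h'⟩
      by_contra hz'
      exact hcell 0 z hz (by simp) (by simpa using not_lt.1 hz') (by simpa using h)
        (by simpa using h₁)
    · exact ⟨2, fun z hz => (hpoint z hz).trans_eq h₁, fun h' => h' h₁⟩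
    rcases lt_trichotomy ‖w‖ 2 with h₂ | h₂ | h₂
    · refine ⟨3, fun z hz => ?_, fun h' => h'.elim (lt_asymm h₁) (lt_asymm h₂)⟩
      by_contra hz'
      obtain ⟨h₃, h₄⟩ := not_or.1 hz'
      refine hcell 1 z hz ?_ ?_ ?_ ?_ <;> push_cast <;> linarith
    · exact ⟨4, fun z hz => (hpoint z hz).trans_eq h₂, fun h' => h' h₂⟩
    · refine ⟨5, fun z hz => ?_, fun h' => lt_asymm h₂ h'⟩
      by_contra hz'
      have h₃ : 2 ≤ ‖z‖ := not_lt.1 hz'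
      have h₄ := hle z
      refine hcell 2 z hz ?_ ?_ ?_ ?_ <;> push_cast <;> linarith
  have hA : A = ⋂ i : {i // A ⊆ M i}, M i := by
    refine (Set.subset_iInter fun i => i.2).antisymm fun w hw => ?_
    by_contra h
    obtain ⟨i, hi, hwi⟩ := hsep w h
    exact hwi (Set.mem_iInter.1 hw ⟨i, hi⟩)
  rw [hA]
  exact IsGraphic.iInter fun i => hM i
end

section
/- Let n ≥ 3, let J be a nonempty even subgraph of the wheel W_n, and let I ∈ SI_5. Then W_n admits no σ_{J,I}-faithful flow if and only if at least one of the following holds: (i) I = ∅; (ii) I = (2,3); (iii) I ⊆ (4,1), n is odd, and among any three consecutive edges of the external cycle of W_n at least one belongs to J; (iv) I ⊆ (1,2)∪(3,4) and either n > 3 is odd and J is the edge set of the external cycle of W_n, or n = 3 and J is a 3-cycle. -/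
open scoped Classical

/-- `J` is a 3-cycle of the wheel: it consists of exactly the edges avoiding one
vertex (for `n = 3`, i.e. `W_3 = K_4`, these are precisely the triangles). -/
def IsTriangle (n : ℕ) (J : Set (wheel n).E) : Prop :=
  ∃ v : (wheel n).V, J = {e : (wheel n).E | (wheel n).src e ≠ v ∧ (wheel n).tgt e ≠ v}

section Arcs

theorem coe_mem_arc_iff {t : ℝ} {a b : ℤ} :
    (t : AddCircle (5 : ℝ)) ∈ arc a b ↔
      ∃ k : ℤ, (a : ℝ) < t + 5 * k ∧ t + 5 * k < (arcEnd a b : ℝ) := by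
  constructor
  · rintro ⟨s, ⟨h₁, h₂⟩, hs⟩
    have h0 : ((s - t : ℝ) : AddCircle (5 : ℝ)) = 0 := by
      rw [AddCircle.coe_sub]
      exact sub_eq_zero.2 hs
    obtain ⟨k, hk⟩ := AddCircle.coe_eq_zero_iff (5 : ℝ) |>.1 h0
    rw [zsmul_eq_mul] at hk
    exact ⟨k, by linarith, by linarith⟩
  · rintro ⟨k, h₁, h₂⟩
    refine ⟨t + 5 * k, ⟨h₁, h₂⟩, ?_⟩
    have h0 : ((5 * k : ℝ) : AddCircle (5 : ℝ)) = 0 :=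
      AddCircle.coe_eq_zero_iff (5 : ℝ) |>.2 ⟨k, by rw [zsmul_eq_mul, mul_comm]⟩
    simp only [AddCircle.coe_add, h0, add_zero]

/-- One of the reals `t` and `-t` lies in `(a, b)`. -/
def AbsBetween (a b t : ℝ) : Prop := (a < t ∧ t < b) ∨ (a < -t ∧ -t < b)

theorem coe_mem_arc_one_four {t : ℝ} (h : AbsBetween 1 4 t) :
    (t : AddCircle (5 : ℝ)) ∈ arc 1 4 := by
  rw [coe_mem_arc_iff]
  rcases h with h | h
  · exact ⟨0, by norm_num; linarith, by norm_num [arcEnd]; linarith⟩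
  · exact ⟨1, by norm_num; linarith, by norm_num [arcEnd]; linarith⟩

theorem exists_coe_of_mem_arc {z : AddCircle (5 : ℝ)} {a b : ℤ} (h : z ∈ arc a b) :
    ∃ t : ℝ, (t : AddCircle (5 : ℝ)) = z ∧ (a : ℝ) < t ∧ t < (arcEnd a b : ℝ) := by
  obtain ⟨t, ht, rfl⟩ := h
  exact ⟨t, rfl, ht⟩

/-- If a real in `(-5, 5)` maps into an arc starting in `[0, 5)`, then its translate by `0`, `5` or
`10` lies in the real interval defining the arc. -/
theorem exists_small_shift {t : ℝ} {a b : ℤ} (ht : AbsBetween (-1) 5 t) (ha : 0 ≤ a) (ha' : a < 5)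
    (h : (t : AddCircle (5 : ℝ)) ∈ arc a b) :
    ((a : ℝ) < t ∧ t < (arcEnd a b : ℝ)) ∨ ((a : ℝ) < t + 5 ∧ t + 5 < (arcEnd a b : ℝ)) ∨
      ((a : ℝ) < t + 10 ∧ t + 10 < (arcEnd a b : ℝ)) := by
  obtain ⟨k, h₁, h₂⟩ := coe_mem_arc_iff.1 h
  have hend : arcEnd a b ≤ a + 5 := by
    unfold arcEnd
    split_ifs <;> omega
  have hend' : (arcEnd a b : ℝ) ≤ a + 5 := by exact_mod_cast hend
  have ha₁ : (0 : ℝ) ≤ a := by exact_mod_cast ha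
  have ha₂ : (a : ℝ) ≤ 4 := by exact_mod_cast (by omega : a ≤ 4)
  have ht' : -5 < t ∧ t < 5 := by
    rcases ht with ht | ht <;> constructor <;> linarith
  have hk₀ : -1 < k := by
    have : (-1 : ℝ) < k := by linarith
    exact_mod_cast this
  have hk₁ : k < 3 := by
    have : (k : ℝ) < 3 := by linarith
    exact_mod_cast this
  interval_cases k
  · left; norm_num at h₁ h₂; exact ⟨h₁, h₂⟩
  · right; left; norm_num at h₁ h₂; exact ⟨h₁, h₂⟩
  · right; right; norm_num at h₁ h₂; exact ⟨h₁, h₂⟩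

theorem absBetween_of_mem_arc_one_four {t : ℝ} (h₁ : -5 < t) (h₂ : t < 5)
    (h : (t : AddCircle (5 : ℝ)) ∈ arc 1 4) : AbsBetween 1 4 t := by
  have ht : AbsBetween (-1) 5 t := by unfold AbsBetween; grind
  have := exists_small_shift ht (by norm_num) (by norm_num) h
  norm_num [arcEnd] at this
  unfold AbsBetween
  grind

theorem absBetween_of_mem_arc_two_three {t : ℝ} (h₁ : -5 < t) (h₂ : t < 5)
    (h : (t : AddCircle (5 : ℝ)) ∈ arc 2 3) : AbsBetween 2 3 t := by
  have ht : AbsBetween (-1) 5 t := by unfold AbsBetween; grind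
  have := exists_small_shift ht (by norm_num) (by norm_num) h
  norm_num [arcEnd] at this
  unfold AbsBetween
  grind

theorem absBetween_of_mem_arc_one_two_union {t : ℝ} (h₁ : -5 < t) (h₂ : t < 5)
    (h : (t : AddCircle (5 : ℝ)) ∈ arc 1 2 ∪ arc 3 4) :
    AbsBetween 1 2 t ∨ AbsBetween 3 4 t := by
  have ht : AbsBetween (-1) 5 t := by unfold AbsBetween; grind
  rcases h with h | h
  all_goals
    have := exists_small_shift ht (by norm_num) (by norm_num) h
    norm_num [arcEnd] at this
    unfold AbsBetween
    grind

theorem absBetween_of_mem_arc_four_one {t : ℝ} (h₁ : -5 < t) (h₂ : t < 5)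
    (h : (t : AddCircle (5 : ℝ)) ∈ arc 4 1) : AbsBetween (-1) 1 t ∨ AbsBetween 4 5 t := by
  have ht : AbsBetween (-1) 5 t := by unfold AbsBetween; grind
  have := exists_small_shift ht (by norm_num) (by norm_num) h
  norm_num [arcEnd] at this
  unfold AbsBetween
  grind

end Arcs

section SymmetricUnions

/-- Membership in a union of integer arcs depends only on the open unit interval or the integer
containing a real lift, and passes from an integer to the two adjacent unit intervals. -/
theorem coe_mem_of_mem_SI5 {I : Set (AddCircle (5 : ℝ))} (hI : I ∈ SI5) {t s : ℝ}
    (ht : (t : AddCircle (5 : ℝ)) ∈ I) (h₁ : (⌈t⌉ : ℝ) - 1 < s) (h₂ : s < (⌊t⌋ : ℝ) + 1) :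
    (s : AddCircle (5 : ℝ)) ∈ I := by
  obtain ⟨-, S, rfl⟩ := hI
  simp only [Set.mem_iUnion] at ht ⊢
  obtain ⟨p, hp, h⟩ := ht
  refine ⟨p, hp, ?_⟩
  obtain ⟨k, ha, hb⟩ := coe_mem_arc_iff.1 h
  refine coe_mem_arc_iff.2 ⟨k, ?_, ?_⟩
  · have : p.1 - 5 * k < ⌈t⌉ := Int.lt_ceil.2 (by push_cast; linarith)
    have : ((p.1 - 5 * k : ℤ) : ℝ) + 1 ≤ (⌈t⌉ : ℝ) := by exact_mod_cast this
    push_cast at this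
    linarith
  · have : ⌊t⌋ < arcEnd p.1 p.2 - 5 * k := Int.floor_lt.2 (by push_cast; linarith)
    have : (⌊t⌋ : ℝ) + 1 ≤ ((arcEnd p.1 p.2 - 5 * k : ℤ) : ℝ) := by exact_mod_cast this
    push_cast at this
    linarith

variable {I : Set (AddCircle (5 : ℝ))}

/-- `I` contains the image of every real that lies, up to sign, in `(a, b)` or in
`(5 - b, 5 - a)`. -/
def ContainsBand (I : Set (AddCircle (5 : ℝ))) (a b : ℝ) : Prop :=
  ∀ t : ℝ, AbsBetween a b t ∨ AbsBetween (5 - b) (5 - a) t → (t : AddCircle (5 : ℝ)) ∈ I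

theorem containsBand_of_Ioo (hI : I ∈ SI5) {a b : ℝ}
    (h : ∀ s : ℝ, a < s → s < b → (s : AddCircle (5 : ℝ)) ∈ I) : ContainsBand I a b := by
  have hneg : ∀ s : ℝ, a < -s → -s < b → (s : AddCircle (5 : ℝ)) ∈ I := fun s h₁ h₂ => by
    rw [hI.1, ← AddCircle.coe_neg]
    exact h _ h₁ h₂
  have hper : ∀ s : ℝ, ((s + 5 : ℝ) : AddCircle (5 : ℝ)) = s := fun s =>
    AddCircle.coe_add_period 5 s
  rintro t ((⟨h₁, h₂⟩ | ⟨h₁, h₂⟩) | (⟨h₁, h₂⟩ | ⟨h₁, h₂⟩))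
  · exact h t h₁ h₂
  · exact hneg t h₁ h₂
  · have := hper (t - 5)
    rw [sub_add_cancel] at this
    rw [this]
    exact hneg _ (by linarith) (by linarith)
  · rw [← hper t]
    exact h _ (by linarith) (by linarith)

/-- A point of `I` with a lift in `[m, m + 1]` forces the whole band `(m, m + 1)` into `I`. -/
theorem containsBand_of_mem (hI : I ∈ SI5) {t : ℝ} (m : ℤ) (ht : (t : AddCircle (5 : ℝ)) ∈ I)
    (h₁ : (m : ℝ) ≤ t) (h₂ : t ≤ m + 1) : ContainsBand I m (m + 1) := by
  refine containsBand_of_Ioo hI fun s hs₁ hs₂ => coe_mem_of_mem_SI5 hI ht ?_ ?_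
  · have : ⌈t⌉ ≤ m + 1 := Int.ceil_le.2 (by push_cast; linarith)
    have : (⌈t⌉ : ℝ) ≤ m + 1 := by exact_mod_cast this
    linarith
  · have : m ≤ ⌊t⌋ := Int.le_floor.2 h₁
    have : (m : ℝ) ≤ ⌊t⌋ := by exact_mod_cast this
    linarith

theorem exists_lift_of_mem (hI : I ∈ SI5) {z : AddCircle (5 : ℝ)} (hz : z ∈ I) :
    ∃ t : ℝ, 0 ≤ t ∧ t ≤ 5 / 2 ∧ (t : AddCircle (5 : ℝ)) ∈ I ∧ (z = t ∨ z = -t) := by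
  obtain ⟨t, ht, rfl⟩ : ∃ t ∈ Set.Ico (0 : ℝ) (0 + 5), (t : AddCircle (5 : ℝ)) = z := by
    have : Fact ((0 : ℝ) < 5) := ⟨by norm_num⟩
    have h := AddCircle.coe_image_Ico_eq (5 : ℝ) 0
    have h' : z ∈ ((↑) : ℝ → AddCircle (5 : ℝ)) '' Set.Ico (0 : ℝ) (0 + 5) := by
      rw [h]; trivial
    exact h'
  rcases le_or_gt t (5 / 2) with h | h
  · exact ⟨t, ht.1, h, hz, Or.inl rfl⟩
  · have h5 : ((5 - t : ℝ) : AddCircle (5 : ℝ)) = -(t : AddCircle (5 : ℝ)) := by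
      rw [AddCircle.coe_sub, AddCircle.coe_period, zero_sub]
    have := ht.2
    refine ⟨5 - t, by linarith, by linarith, ?_, Or.inr ?_⟩
    · rw [h5, ← hI.1]
      exact hz
    · rw [h5, neg_neg]

theorem containsBand_cases (hI : I ∈ SI5) (hne : I.Nonempty) :
    ContainsBand I 0 1 ∨ ContainsBand I 1 2 ∨ ContainsBand I 2 3 := by
  obtain ⟨z, hz⟩ := hne
  obtain ⟨t, h₀, h₁, ht, -⟩ := exists_lift_of_mem hI hz
  have h := fun m : ℤ => containsBand_of_mem hI m ht
  rcases le_or_gt t 1 with h1 | h1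
  · left; simpa using h 0 (by simpa) (by simpa)
  rcases le_or_gt t 2 with h2 | h2
  · right; left; simpa [one_add_one_eq_two] using h 1 (by simpa using h1.le) (by norm_num; linarith)
  · right; right
    have := h 2 (by simpa using h2.le) (by norm_num; linarith)
    norm_num at this
    exact this

theorem subset_arc_four_one (hI : I ∈ SI5) (h₁ : ¬ ContainsBand I 1 2)
    (h₂ : ¬ ContainsBand I 2 3) : I ⊆ arc 4 1 := by
  intro z hz
  obtain ⟨t, h₀, h₅, ht, hzt⟩ := exists_lift_of_mem hI hz
  have h := fun m : ℤ => containsBand_of_mem hI m ht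
  have ht1 : t < 1 := by
    by_contra! h1
    rcases le_or_gt t 2 with h2 | h2
    · refine h₁ ?_
      simpa [one_add_one_eq_two] using h 1 (by simpa using h1) (by norm_num; linarith)
    · refine h₂ ?_
      have := h 2 (by simpa using h2.le) (by norm_num; linarith)
      norm_num at this
      exact this
  rcases hzt with rfl | rfl
  · exact coe_mem_arc_iff.2 ⟨1, by norm_num; linarith, by norm_num [arcEnd]; linarith⟩
  · rw [← AddCircle.coe_neg]
    exact coe_mem_arc_iff.2 ⟨1, by norm_num; linarith, by norm_num [arcEnd]; linarith⟩

theorem subset_arc_one_two_union (hI : I ∈ SI5) (h₀ : ¬ ContainsBand I 0 1)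
    (h₂ : ¬ ContainsBand I 2 3) : I ⊆ arc 1 2 ∪ arc 3 4 := by
  intro z hz
  obtain ⟨t, ht₀, h₅, ht, hzt⟩ := exists_lift_of_mem hI hz
  have h := fun m : ℤ => containsBand_of_mem hI m ht
  have ht1 : 1 < t := by
    by_contra! h1
    exact h₀ (by simpa using h 0 (by simpa) (by simpa))
  have ht2 : t < 2 := by
    by_contra! h2
    refine h₂ ?_
    have := h 2 (by simpa using h2) (by norm_num; linarith)
    norm_num at this
    exact this
  rcases hzt with rfl | rfl
  · exact Or.inl (coe_mem_arc_iff.2 ⟨0, by norm_num; linarith, by norm_num [arcEnd]; linarith⟩)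
  · rw [← AddCircle.coe_neg]
    exact Or.inr (coe_mem_arc_iff.2 ⟨1, by norm_num; linarith, by norm_num [arcEnd]; linarith⟩)

theorem eq_arc_two_three (hI : I ∈ SI5) (hne : I.Nonempty) (h₀ : ¬ ContainsBand I 0 1)
    (h₁ : ¬ ContainsBand I 1 2) : I = arc 2 3 := by
  have h₂ : ContainsBand I 2 3 :=
    ((containsBand_cases hI hne).resolve_left h₀).resolve_left h₁
  refine Set.Subset.antisymm (fun z hz => ?_) ?_
  · obtain ⟨t, ht₀, h₅, ht, hzt⟩ := exists_lift_of_mem hI hz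
    have h := fun m : ℤ => containsBand_of_mem hI m ht
    have ht2 : 2 < t := by
      by_contra! h2
      rcases le_or_gt t 1 with h1 | h1
      · exact h₀ (by simpa using h 0 (by simpa) (by simpa))
      · refine h₁ ?_
        simpa [one_add_one_eq_two] using h 1 (by simpa using h1.le) (by norm_num; linarith)
    rcases hzt with rfl | rfl
    · exact coe_mem_arc_iff.2 ⟨0, by norm_num; linarith, by norm_num [arcEnd]; linarith⟩
    · rw [← AddCircle.coe_neg]
      exact coe_mem_arc_iff.2 ⟨1, by norm_num; linarith, by norm_num [arcEnd]; linarith⟩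
  · rintro z ⟨t, ht, rfl⟩
    norm_num [arcEnd] at ht
    exact h₂ t (Or.inl (Or.inl ht))

end SymmetricUnions

section Rotation

variable {n : ℕ}

theorem rot_injective : Function.Injective (rot n) := by
  intro i j h
  have h' : (i.val + 1) % n = (j.val + 1) % n := congrArg Fin.val h
  have hmod : i.val ≡ j.val [MOD n] := Nat.ModEq.add_right_cancel' 1 h'
  exact Fin.ext (by simpa [Nat.ModEq, Nat.mod_eq_of_lt] using hmod)

theorem rot_bijective : Function.Bijective (rot n) := Finite.injective_iff_bijective.1 rot_injective

theorem rot_eq_add_one [NeZero n] (i : Fin n) : rot n i = i + 1 := by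
  apply Fin.ext
  simp [rot, Fin.val_add]

theorem rot_add [NeZero n] (i j : Fin n) : rot n i + j = rot n (i + j) := by
  simp only [rot_eq_add_one]
  abel

theorem rot_eq_zero [NeZero n] {i : Fin n} (hi : i.val + 1 = n) : rot n i = 0 :=
  Fin.ext (by simp [rot, hi])

theorem add_rot_of_last [NeZero n] {i : Fin n} (hi : i.val + 1 = n) (j : Fin n) :
    i + rot n j = j := by
  rw [add_comm, rot_add, add_comm, ← rot_add, rot_eq_zero hi, zero_add]

theorem eq_rot_zero_of_val_eq_one [NeZero n] {i : Fin n} (hi : i.val = 1) : i = rot n 0 :=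
  Fin.ext (by simp [rot, hi, Nat.mod_eq_of_lt (hi ▸ i.isLt)])

theorem val_rot_cases (i : Fin n) :
    (i.val + 1 < n ∧ (rot n i).val = i.val + 1) ∨ (i.val + 1 = n ∧ (rot n i).val = 0) := by
  have hi := i.isLt
  rcases Nat.lt_or_ge (i.val + 1) n with h | h
  · exact Or.inl ⟨h, Nat.mod_eq_of_lt h⟩
  · have h' : i.val + 1 = n := by omega
    exact Or.inr ⟨h', by simp [rot, h']⟩

/-- A two-colouring of a cycle that alternates along every edge forces even length. -/
theorem even_of_alternating (hn : n ≠ 0) (b : Fin n → Prop) (hb : ∀ i, b (rot n i) ↔ ¬ b i) :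
    Even n := by
  have hn' : 0 < n := Nat.pos_of_ne_zero hn
  have key : ∀ k (hk : k < n), b ⟨k, hk⟩ ↔ (Even k ↔ b ⟨0, hn'⟩) := by
    intro k
    induction k with
    | zero => simp
    | succ k ih =>
      intro hk
      have h := hb ⟨k, by omega⟩
      have hr : rot n ⟨k, by omega⟩ = ⟨k + 1, hk⟩ := Fin.ext (Nat.mod_eq_of_lt hk)
      rw [hr] at h
      rw [h, ih (by omega), Nat.even_add_one]
      tauto
  have h := hb ⟨n - 1, by omega⟩
  have hr : rot n ⟨n - 1, by omega⟩ = ⟨0, hn'⟩ :=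
    Fin.ext (by simp [rot, Nat.sub_add_cancel (Nat.one_le_iff_ne_zero.2 hn)])
  rw [hr, key (n - 1) (by omega)] at h
  have hodd : ¬ Even (n - 1) := by tauto
  have : Even (n - 1 + 1) := Nat.even_add_one.2 hodd
  rwa [Nat.sub_add_cancel hn'] at this

theorem forall_of_rot_closed {R : Fin n → Prop} (h : ∀ i, R i → R (rot n i)) {j : Fin n}
    (hj : R j) (i : Fin n) : R i := by
  have hR : ∀ k : ℕ, R ((rot n)^[k] j) := by
    intro k
    induction k with
    | zero => exact hj
    | succ k ih => rw [Function.iterate_succ_apply']; exact h _ ih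
  have hval : ∀ k : ℕ, ((rot n)^[k] j).val = (j.val + k) % n := by
    intro k
    induction k with
    | zero => exact (Nat.mod_eq_of_lt j.isLt).symm
    | succ k ih =>
      rw [Function.iterate_succ_apply']
      change (_ + 1) % n = _
      rw [ih, Nat.mod_add_mod, Nat.add_assoc]
  have hi : (rot n)^[n - j.val + i.val] j = i := by
    apply Fin.ext
    have hj' := j.isLt
    have e : j.val + (n - j.val + i.val) = n + i.val := by omega
    rw [hval, e, Nat.add_mod_left, Nat.mod_eq_of_lt i.isLt]
  exact hi ▸ hR _

theorem exists_color_change {R : Fin n → Prop} (h : ∃ i, R i) (h' : ∃ i, ¬ R i) :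
    ∃ i, ¬ (R i ↔ R (rot n i)) := by
  by_contra! hc
  obtain ⟨i, hi⟩ := h
  obtain ⟨j, hj⟩ := h'
  exact hj (forall_of_rot_closed (fun k hk => (hc k).1 hk) hi j)

end Rotation

section WheelFlows

open Multigraph

variable {n : ℕ}

theorem wheel_sum {M : Type*} [AddCommMonoid M] (g : (wheel n).E → M) :
    ∑ e, g e = ∑ i : Fin n, g (Sum.inl i) + ∑ i : Fin n, g (Sum.inr i) :=
  Fintype.sum_sum_type (α₁ := Fin n) (α₂ := Fin n) g

theorem wheel_sum_indicator_tgt {M : Type*} [AddCommMonoid M] (f : (wheel n).E → M) (i : Fin n) :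
    (∑ e : (wheel n).E, Set.indicator {e' | (wheel n).tgt e' = some (rot n i)} f e) =
      f (Sum.inl i) + f (Sum.inr (rot n i)) := by
  have hrim : ∀ j : Fin n, (wheel n).tgt (Sum.inl j) = some (rot n i) ↔ j = i := fun j =>
    (Option.some_inj (a := rot n j)).trans rot_injective.eq_iff
  have hspoke : ∀ j : Fin n, (wheel n).tgt (Sum.inr j) = some (rot n i) ↔ j = rot n i := fun j =>
    Option.some_inj (a := j)
  simp only [wheel_sum, Set.indicator_apply, Set.mem_ofPred_eq, hrim, hspoke, Finset.sum_ite_eq',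
    Finset.mem_univ, if_true]

theorem wheel_sum_indicator_src {M : Type*} [AddCommMonoid M] (f : (wheel n).E → M) (i : Fin n) :
    (∑ e : (wheel n).E, Set.indicator {e' | (wheel n).src e' = some i} f e) = f (Sum.inl i) := by
  have hrim : ∀ j : Fin n, (wheel n).src (Sum.inl j) = some i ↔ j = i := fun j =>
    Option.some_inj (a := j)
  have hspoke : ∀ j : Fin n, (wheel n).src (Sum.inr j) = some i ↔ False := fun j =>
    iff_false_intro (Option.some_ne_none i).symm
  simp only [wheel_sum, Set.indicator_apply, Set.mem_ofPred_eq, hrim, hspoke, Finset.sum_ite_eq',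
    Finset.mem_univ, if_true, if_false, Finset.sum_const_zero, add_zero]

theorem wheel_isFlow_iff {M : Type*} [AddCommGroup M] (f : (wheel n).E → M) :
    (wheel n).IsFlow f ↔
      ∀ i, f (Sum.inr (rot n i)) = f (Sum.inl (rot n i)) - f (Sum.inl i) := by
  constructor
  · intro h i
    have := h (some (rot n i))
    rw [wheel_sum_indicator_tgt, wheel_sum_indicator_src] at this
    rw [← this, add_sub_cancel_left]
  · rintro h (_ | v)
    · have hsum : ∑ i, f (Sum.inr i) = 0 := by
        have hb := rot_bijective (n := n)
        rw [← hb.sum_comp (fun i => f (Sum.inr i)), Finset.sum_congr rfl fun i _ => h i,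
          Finset.sum_sub_distrib, hb.sum_comp (fun i => f (Sum.inl i)), sub_self]
      have htgt : ∀ e, (wheel n).tgt e = none ↔ False := by
        rintro (j | j) <;> exact iff_false_intro (Option.some_ne_none _)
      have hrim : ∀ j : Fin n, (wheel n).src (Sum.inl j) = none ↔ False := fun j =>
        iff_false_intro (Option.some_ne_none j)
      have hspoke : ∀ j : Fin n, (wheel n).src (Sum.inr j) = none ↔ True := fun j =>
        iff_true_intro rfl
      simp only [wheel_sum, Set.indicator_apply, Set.mem_ofPred_eq, htgt, hrim, hspoke, if_true,
        if_false, Finset.sum_const_zero, hsum, add_zero]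
    · obtain ⟨i, rfl⟩ := rot_bijective.2 v
      have := h i
      rw [wheel_sum_indicator_tgt, wheel_sum_indicator_src, this, add_sub_cancel]

theorem spoke_mem_iff {J : Set (wheel n).E} (hJ : (wheel n).IsEvenSubgraph J) (i : Fin n) :
    Sum.inr (rot n i) ∈ J ↔
      ¬ (Sum.inl i ∈ J ↔ Sum.inl (rot n i) ∈ J) := by
  have hcard : ∀ P : (wheel n).E → Prop,
      Nat.card {e : (wheel n).E // e ∈ J ∧ P e} =
        ∑ e : (wheel n).E, Set.indicator {e' | P e'} (fun e' => if e' ∈ J then 1 else 0) e := by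
    intro P
    rw [Nat.card_eq_fintype_card, Fintype.card_subtype, Finset.card_filter]
    refine Finset.sum_congr rfl fun e _ => ?_
    by_cases h₁ : P e <;> by_cases h₂ : e ∈ J <;> simp [h₁, h₂]
  have h := hJ (some (rot n i))
  rw [hcard, hcard, wheel_sum_indicator_tgt, wheel_sum_indicator_src] at h
  have hpar : ∀ P : Prop, Even (if P then 1 else 0) ↔ ¬ P := fun P => by
    by_cases hP : P <;> simp [hP]
  simp only [Nat.even_add, hpar] at h
  tauto

/-- `x` assigns rim values to the wheel such that the resulting flow is faithful for the even
subgraph whose rim edges are those satisfying `R`. -/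
def IsRimAssignment (R : Fin n → Prop) (I : Set (AddCircle (5 : ℝ)))
    (x : Fin n → AddCircle (5 : ℝ)) : Prop :=
  (∀ i, x i ∈ if R i then I else arc 1 4) ∧
    ∀ i, x (rot n i) - x i ∈ if R i ↔ R (rot n i) then arc 1 4 else I

theorem hasFaithfulOn_wheel_iff {J : Set (wheel n).E} (hJ : (wheel n).IsEvenSubgraph J)
    (I : Set (AddCircle (5 : ℝ))) :
    (wheel n).HasFaithfulOn J I ↔
      ∃ x, IsRimAssignment (fun i : Fin n => Sum.inl i ∈ J) I x := by
  have hspoke := spoke_mem_iff hJ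
  constructor
  · rintro ⟨f, hf, hin, hout⟩
    rw [wheel_isFlow_iff] at hf
    refine ⟨fun i => f (Sum.inl i), fun i => ?_, fun i => ?_⟩
    · split_ifs with h
      exacts [hin _ h, hout _ h]
    · simp only [← hf]
      split_ifs with h
      · exact hout _ fun hm => (hspoke i).1 hm h
      · exact hin _ ((hspoke i).2 h)
  · rintro ⟨x, hrim, hsp⟩
    have hprev := rot_bijective (n := n)
    let e := Equiv.ofBijective _ hprev
    have he : ∀ i, e.symm (rot n i) = i := fun i => e.symm_apply_apply i
    let f : (wheel n).E → AddCircle (5 : ℝ) :=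
      Sum.elim (α := Fin n) (β := Fin n) x fun i => x i - x (e.symm i)
    have hf : ∀ i, f (Sum.inr (rot n i)) = x (rot n i) - x i := fun i => by
      change x (rot n i) - x (e.symm (rot n i)) = _
      rw [he]
    refine ⟨f, (wheel_isFlow_iff f).2 hf, ?_, ?_⟩
    · rintro (i | i) hi
      · have h := hrim i
        split_ifs at h
        exacts [h, absurd hi ‹_›]
      · obtain ⟨i, rfl⟩ := hprev.2 i
        have h := hsp i
        rw [if_neg ((hspoke i).1 hi)] at h
        rwa [hf]
    · rintro (i | i) hi
      · have h := hrim i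
        split_ifs at h
        exacts [absurd ‹_› hi, h]
      · obtain ⟨i, rfl⟩ := hprev.2 i
        have h := hsp i
        rw [if_pos (not_not.1 fun h' => hi ((hspoke i).2 h'))] at h
        rwa [hf]

theorem exists_isRimAssignment_of_shift [NeZero n] {R : Fin n → Prop}
    {I : Set (AddCircle (5 : ℝ))} (j : Fin n)
    (h : ∃ x, IsRimAssignment (fun i => R (i + j)) I x) : ∃ x, IsRimAssignment R I x := by
  obtain ⟨x, h₁, h₂⟩ := h
  refine ⟨fun i => x (i - j), fun i => ?_, fun i => ?_⟩
  · simpa using h₁ (i - j)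
  · have := h₂ (i - j)
    simp only [rot_eq_add_one] at this ⊢
    have e₁ : i + 1 - j = i - j + 1 := by abel
    have e₂ : i - j + 1 + j = i + 1 := by abel
    simpa only [e₁, e₂, sub_add_cancel] using this

theorem IsRimAssignment.exists_shift [NeZero n] {R : Fin n → Prop}
    {I : Set (AddCircle (5 : ℝ))} (j : Fin n) (h : ∃ x, IsRimAssignment R I x) :
    ∃ x, IsRimAssignment (fun i => R (i + j)) I x :=
  exists_isRimAssignment_of_shift (-j) (by simpa using h)

end WheelFlows

section Constructions

variable {n : ℕ} {R : Fin n → Prop} {I : Set (AddCircle (5 : ℝ))}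

theorem isRimAssignment_of_real (x : Fin n → ℝ)
    (hrim : ∀ i, if R i then (x i : AddCircle (5 : ℝ)) ∈ I else AbsBetween 1 4 (x i))
    (hspoke : ∀ i, if R i ↔ R (rot n i) then AbsBetween 1 4 (x (rot n i) - x i)
      else ((x (rot n i) - x i : ℝ) : AddCircle (5 : ℝ)) ∈ I) :
    ∃ x, IsRimAssignment R I x := by
  refine ⟨fun i => x i, fun i => ?_, fun i => ?_⟩
  · have := hrim i
    split_ifs at this ⊢
    exacts [this, coe_mem_arc_one_four this]
  · have := hspoke i
    simp only [← AddCircle.coe_sub]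
    split_ifs at this ⊢
    exacts [coe_mem_arc_one_four this, this]

theorem exists_isRimAssignment_of_even (hn : Even n) (h₀ : ContainsBand I 0 1) :
    ∃ x, IsRimAssignment R I x := by
  rw [Nat.even_iff] at hn
  refine isRimAssignment_of_real (fun i => if R i then if i.val % 2 = 0 then 9 / 10 else 41 / 10
    else if i.val % 2 = 0 then 37 / 10 else 13 / 10) (fun i => ?_) (fun i => ?_)
  · split_ifs
    all_goals solve
      | refine h₀ _ ?_; norm_num [AbsBetween]
      | norm_num [AbsBetween]
  · have hi := val_rot_cases i
    by_cases hr : R i <;> by_cases hs : R (rot n i) <;>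
      simp only [hr, hs, if_true, if_false, iff_true, iff_false, not_true]
    all_goals
      split_ifs
      all_goals solve
        | omega
        | refine h₀ _ ?_; norm_num [AbsBetween]
        | norm_num [AbsBetween]

theorem exists_isRimAssignment_of_three_free_at_zero (hn3 : 3 ≤ n) (hn : Odd n)
    (h₀ : ContainsBand I 0 1) (hz : ∀ i, i.val = 0 → ¬ R i) (hnext : ∀ i, i.val = 1 → ¬ R i)
    (hprev : ∀ i, i.val + 1 = n → ¬ R i) : ∃ x, IsRimAssignment R I x := by
  rw [Nat.odd_iff] at hn
  refine isRimAssignment_of_real (fun i => if i.val = 0 then 5 / 2 else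
    if R i then if i.val % 2 = 0 then 9 / 10 else 41 / 10
    else if i.val % 2 = 0 then 37 / 10 else 13 / 10) (fun i => ?_) (fun i => ?_)
  · have hz := hz i
    split_ifs
    all_goals solve
      | exact absurd ‹R i› (hz ‹_›)
      | refine h₀ _ ?_; norm_num [AbsBetween]
      | norm_num [AbsBetween]
  · have hi := val_rot_cases i
    have hz₁ := hz i
    have hz₂ := hz (rot n i)
    have hnext := hnext (rot n i)
    have hprev := hprev i
    by_cases hr : R i <;> by_cases hs : R (rot n i) <;>
      simp only [hr, hs, if_true, if_false, iff_true, iff_false, not_true, not_false_eq_true,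
        imp_false] at hz₁ hz₂ hnext hprev ⊢
    all_goals
      split_ifs
      all_goals solve
        | omega
        | refine h₀ _ ?_; norm_num [AbsBetween]
        | norm_num [AbsBetween]

theorem exists_isRimAssignment_of_three_free (hn3 : 3 ≤ n) (hn : Odd n)
    (h₀ : ContainsBand I 0 1) {j : Fin n} (hj₀ : ¬ R j) (hj₁ : ¬ R (rot n j))
    (hj₂ : ¬ R (rot n (rot n j))) : ∃ x, IsRimAssignment R I x := by
  have : NeZero n := ⟨by omega⟩
  refine exists_isRimAssignment_of_shift (rot n j)
    (exists_isRimAssignment_of_three_free_at_zero hn3 hn h₀ ?_ ?_ ?_)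
  · intro i hi
    rwa [Fin.val_eq_zero_iff.1 hi, zero_add]
  · intro i hi
    rwa [eq_rot_zero_of_val_eq_one hi, rot_add, zero_add]
  · intro i hi
    rwa [add_rot_of_last hi]

theorem exists_isRimAssignment_of_color_change_at_last (hn : Odd n) (h₀ : ContainsBand I 0 1)
    (h₂ : ContainsBand I 2 3) (hlast : ∀ i, i.val + 1 = n → ¬ (R i ↔ R (rot n i))) :
    ∃ x, IsRimAssignment R I x := by
  rw [Nat.odd_iff] at hn
  refine isRimAssignment_of_real (fun i => if R i then if i.val % 2 = 0 then 9 / 10 else 41 / 10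
    else if i.val % 2 = 0 then 37 / 10 else 13 / 10) (fun i => ?_) (fun i => ?_)
  · split_ifs
    all_goals solve
      | refine h₀ _ ?_; norm_num [AbsBetween]
      | norm_num [AbsBetween]
  · have hi := val_rot_cases i
    have hlast := hlast i
    by_cases hr : R i <;> by_cases hs : R (rot n i) <;>
      simp only [hr, hs, if_true, if_false, iff_true, iff_false, not_true, not_false_eq_true,
        imp_false] at hlast ⊢
    all_goals
      split_ifs
      all_goals solve
        | omega
        | refine h₀ _ ?_; norm_num [AbsBetween]
        | refine h₂ _ ?_; norm_num [AbsBetween]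
        | norm_num [AbsBetween]

theorem exists_isRimAssignment_of_band_zero_two (hn3 : 3 ≤ n) (hn : Odd n) (hne : ∃ i, R i)
    (h₀ : ContainsBand I 0 1) (h₂ : ContainsBand I 2 3) : ∃ x, IsRimAssignment R I x := by
  rw [Nat.odd_iff] at hn
  have : NeZero n := ⟨by omega⟩
  by_cases hall : ∀ i, R i
  · refine isRimAssignment_of_real (fun i => if i.val = 0 then 5 / 2 else
      if i.val % 2 = 0 then 9 / 10 else 41 / 10) (fun i => ?_) (fun i => ?_)
    · simp only [hall, if_true]
      split_ifs
      all_goals solve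
        | refine h₀ _ ?_; norm_num [AbsBetween]
        | refine h₂ _ ?_; norm_num [AbsBetween]
    · have hi := val_rot_cases i
      simp only [hall, if_true]
      split_ifs
      all_goals solve
        | omega
        | norm_num [AbsBetween]
  · obtain ⟨j, hj⟩ := exists_color_change hne (not_forall.1 hall)
    refine exists_isRimAssignment_of_shift (rot n j)
      (exists_isRimAssignment_of_color_change_at_last (Nat.odd_iff.2 hn) h₀ h₂ fun i hi => ?_)
    rwa [add_rot_of_last hi, rot_eq_zero hi, zero_add]

theorem exists_isRimAssignment_of_even_of_band_one (hn : Even n) (h₁ : ContainsBand I 1 2) :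
    ∃ x, IsRimAssignment R I x := by
  rw [Nat.even_iff] at hn
  refine isRimAssignment_of_real (fun i => if i.val % 2 = 0 then 3 / 2 else 33 / 10)
    (fun i => ?_) (fun i => ?_)
  · split_ifs
    all_goals solve
      | refine h₁ _ ?_; norm_num [AbsBetween]
      | norm_num [AbsBetween]
  · have hi := val_rot_cases i
    split_ifs
    all_goals solve
      | omega
      | refine h₁ _ ?_; norm_num [AbsBetween]
      | norm_num [AbsBetween]

theorem exists_isRimAssignment_of_odd_of_band_one (hn5 : 5 ≤ n) (hn : Odd n)
    (h₁ : ContainsBand I 1 2) (hz : ∀ i, i.val = 0 → R i → ContainsBand I 2 3) :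
    ∃ x, IsRimAssignment R I x := by
  rw [Nat.odd_iff] at hn
  refine isRimAssignment_of_real (fun i => if i.val = 0 then 5 / 2 else
    if i.val % 2 = 0 then (if i.val + 1 = n then 18 / 5 else 33 / 10)
    else if i.val + 2 = n then 17 / 10 else 7 / 5) (fun i => ?_) (fun i => ?_)
  · have hz := hz i
    split_ifs
    all_goals solve
      | refine hz ‹_› ‹_› _ ?_; norm_num [AbsBetween]
      | refine h₁ _ ?_; norm_num [AbsBetween]
      | norm_num [AbsBetween]
  · have hi := val_rot_cases i
    split_ifs
    all_goals solve
      | omega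
      | refine h₁ _ ?_; norm_num [AbsBetween]
      | norm_num [AbsBetween]

theorem exists_isRimAssignment_three_of_band_one {R : Fin 3 → Prop} (h₁ : ContainsBand I 1 2)
    (h : R 0 ∨ ¬ (R 1 ↔ R 2) → ContainsBand I 2 3) : ∃ x, IsRimAssignment R I x := by
  refine isRimAssignment_of_real ![5 / 2, 11 / 10, 39 / 10] (fun i => ?_) (fun i => ?_)
  · fin_cases i
    all_goals
      simp only [Fin.zero_eta, Fin.mk_one, Fin.reduceFinMk, Matrix.cons_val]
      split_ifs
      all_goals solve
        | refine h₁ _ ?_; norm_num [AbsBetween]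
        | refine h (Or.inl ‹_›) _ ?_; norm_num [AbsBetween]
        | norm_num [AbsBetween]
  · have r₀ : rot 3 0 = 1 := rfl
    have r₁ : rot 3 1 = 2 := rfl
    have r₂ : rot 3 2 = 0 := rfl
    fin_cases i
    all_goals
      simp only [Fin.zero_eta, Fin.mk_one, Fin.reduceFinMk, r₀, r₁, r₂, Matrix.cons_val]
      split_ifs
      all_goals solve
        | refine h₁ _ ?_; norm_num [AbsBetween]
        | refine h (Or.inr ‹_›) _ ?_; norm_num [AbsBetween]
        | norm_num [AbsBetween]

theorem exists_isRimAssignment_of_band_zero_one (hn3 : 3 ≤ n) (hn : Odd n) (h₀ : ContainsBand I 0 1)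
    (h₁ : ContainsBand I 1 2) (hz : ∀ i, i.val = 0 → R i)
    (hnz : ∀ i j, i.val ≠ 0 → j.val ≠ 0 → (R i ↔ R j)) : ∃ x, IsRimAssignment R I x := by
  rw [Nat.odd_iff] at hn
  refine isRimAssignment_of_real (fun i => if i.val = 0 then 1 / 2 else
    if i.val % 2 = 0 then 39 / 10 else 19 / 10) (fun i => ?_) (fun i => ?_)
  · have hz := hz i
    split_ifs
    all_goals solve
      | exact absurd (hz ‹_›) ‹_›
      | refine h₀ _ ?_; norm_num [AbsBetween]
      | refine h₁ _ ?_; norm_num [AbsBetween]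
      | norm_num [AbsBetween]
  · have hi := val_rot_cases i
    have hnz := hnz i (rot n i)
    split_ifs
    all_goals solve
      | omega
      | exact absurd (hnz ‹_› ‹_›) ‹_›
      | refine h₁ _ ?_; norm_num [AbsBetween]
      | norm_num [AbsBetween]

end Constructions

section Obstructions

variable {n : ℕ} {R : Fin n → Prop} {I : Set (AddCircle (5 : ℝ))}

theorem IsRimAssignment.exists_lift {x : Fin n → AddCircle (5 : ℝ)} (hx : IsRimAssignment R I x)
    (B : ℝ → Prop) (hB : ∀ z ∈ I, ∃ t : ℝ, (t : AddCircle (5 : ℝ)) = z ∧ B t) :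
    ∃ t : Fin n → ℝ, (∀ i, R i → B (t i)) ∧ (∀ i, ¬ R i → 1 < t i ∧ t i < 4) ∧
      ∀ i, ((t (rot n i) - t i : ℝ) : AddCircle (5 : ℝ)) ∈
        if R i ↔ R (rot n i) then arc 1 4 else I := by
  have hlift : ∀ i, ∃ t : ℝ, (t : AddCircle (5 : ℝ)) = x i ∧
      (R i → B t) ∧ (¬ R i → 1 < t ∧ t < 4) := fun i => by
    have h := hx.1 i
    split_ifs at h with hi
    · obtain ⟨t, ht, htB⟩ := hB _ h
      exact ⟨t, ht, fun _ => htB, fun h' => absurd hi h'⟩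
    · obtain ⟨t, ht, h₁, h₂⟩ := exists_coe_of_mem_arc h
      norm_num [arcEnd] at h₁ h₂
      exact ⟨t, ht, fun h' => absurd h' hi, fun _ => ⟨h₁, h₂⟩⟩
  choose t ht hR hN using hlift
  refine ⟨t, hR, hN, fun i => ?_⟩
  rw [AddCircle.coe_sub, ht, ht]
  exact hx.2 i

theorem not_isRimAssignment_arc_two_three (hne : ∃ i, R i) (x : Fin n → AddCircle (5 : ℝ)) :
    ¬ IsRimAssignment R (arc 2 3) x := by
  intro hx
  obtain ⟨t, hR, hN, hd⟩ := hx.exists_lift (fun t => 2 < t ∧ t < 3) fun z hz => by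
    obtain ⟨t, ht, h₁, h₂⟩ := exists_coe_of_mem_arc hz
    norm_num [arcEnd] at h₁ h₂
    exact ⟨t, ht, h₁, h₂⟩
  obtain ⟨i, hi⟩ := hne
  have hd := hd i
  have h₁ := hR i hi
  by_cases hs : R (rot n i)
  · have h₂ := hR _ hs
    rw [if_pos (iff_of_true hi hs)] at hd
    have := absBetween_of_mem_arc_one_four (by linarith) (by linarith) hd
    unfold AbsBetween at this
    grind
  · have h₂ := hN _ hs
    rw [if_neg (fun h => hs (h.1 hi))] at hd
    have := absBetween_of_mem_arc_two_three (by linarith) (by linarith) hd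
    unfold AbsBetween at this
    grind

theorem not_isRimAssignment_of_subset_arc_four_one (hn0 : n ≠ 0) (hn : Odd n) (hI : I ⊆ arc 4 1)
    (h : ∀ i, R i ∨ R (rot n i) ∨ R (rot n (rot n i))) (x : Fin n → AddCircle (5 : ℝ)) :
    ¬ IsRimAssignment R I x := by
  intro hx
  obtain ⟨t, hR, hN, hd⟩ := hx.exists_lift (fun t => -1 < t ∧ t < 1) fun z hz => by
    obtain ⟨t, ht, h₁, h₂⟩ := exists_coe_of_mem_arc (hI hz)
    norm_num [arcEnd] at h₁ h₂
    refine ⟨t - 5, ?_, by linarith, by linarith⟩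
    rw [AddCircle.coe_sub, AddCircle.coe_period, sub_zero, ht]
  have hsame : ∀ i, (R i ↔ R (rot n i)) → AbsBetween 1 4 (t (rot n i) - t i) := fun i hi => by
    have hd := hd i
    rw [if_pos hi] at hd
    refine absBetween_of_mem_arc_one_four ?_ ?_ hd <;>
      by_cases h₁ : R i <;> by_cases h₂ : R (rot n i) <;> grind
  have hdiff : ∀ i, ¬ (R i ↔ R (rot n i)) →
      AbsBetween (-1) 1 (t (rot n i) - t i) ∨ AbsBetween 4 5 (t (rot n i) - t i) := fun i hi => by
    have hd := hd i
    rw [if_neg hi] at hd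
    refine absBetween_of_mem_arc_four_one ?_ ?_ (hI hd) <;>
      by_cases h₁ : R i <;> by_cases h₂ : R (rot n i) <;> grind
  unfold AbsBetween at hsame hdiff
  refine Nat.not_even_iff_odd.2 hn
    (even_of_alternating hn0 (fun i => R i ↔ if R i then 0 < t i else t i < 5 / 2) fun i => ?_)
  obtain ⟨p, rfl⟩ := rot_bijective.2 i
  have hp := h p
  have hq := h (rot n p)
  generalize hj : rot n p = j at *
  generalize hk : rot n j = k at *
  have a := hsame p
  have b := hsame j
  have c := hsame k
  have a' := hdiff p
  have b' := hdiff j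
  have c' := hdiff k
  rw [hj] at a a'
  rw [hk] at b b'
  have p₁ := hR p
  have p₂ := hN p
  have j₁ := hR j
  have j₂ := hN j
  have k₁ := hR k
  have k₂ := hN k
  have l₁ := hR (rot n k)
  have l₂ := hN (rot n k)
  by_cases hRj : R j <;> by_cases hRk : R k
  · simp only [hRj, hRk, if_true] at *
    grind
  · simp only [hRj, hRk, if_true, if_false] at *
    grind
  · simp only [hRj, hRk, if_true, if_false] at *
    grind
  · simp only [hRj, hRk, if_false] at *
    grind

theorem exists_lift_arc_one_two_union (hI : I ⊆ arc 1 2 ∪ arc 3 4) (z : AddCircle (5 : ℝ))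
    (hz : z ∈ I) :
    ∃ t : ℝ, (t : AddCircle (5 : ℝ)) = z ∧ ((1 < t ∧ t < 2) ∨ (3 < t ∧ t < 4)) := by
  rcases hI hz with hz | hz
  all_goals
    obtain ⟨t, ht, h₁, h₂⟩ := exists_coe_of_mem_arc hz
    norm_num [arcEnd] at h₁ h₂
  exacts [⟨t, ht, Or.inl ⟨h₁, h₂⟩⟩, ⟨t, ht, Or.inr ⟨h₁, h₂⟩⟩]

theorem not_isRimAssignment_of_subset_arc_one_two_union (hn0 : n ≠ 0) (hn : Odd n)
    (hI : I ⊆ arc 1 2 ∪ arc 3 4) (h : ∀ i, R i) (x : Fin n → AddCircle (5 : ℝ)) :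
    ¬ IsRimAssignment R I x := by
  intro hx
  obtain ⟨t, hR, -, hd⟩ := hx.exists_lift (fun t => (1 < t ∧ t < 2) ∨ (3 < t ∧ t < 4))
    (exists_lift_arc_one_two_union hI)
  refine Nat.not_even_iff_odd.2 hn (even_of_alternating hn0 (fun i => t i < 5 / 2) fun i => ?_)
  have hd := hd i
  rw [if_pos (iff_of_true (h _) (h _))] at hd
  have h₁ := hR i (h _)
  have h₂ := hR (rot n i) (h _)
  have := absBetween_of_mem_arc_one_four (by grind) (by grind) hd
  unfold AbsBetween at this
  grind

theorem not_isRimAssignment_three {R : Fin 3 → Prop} (hI : I ⊆ arc 1 2 ∪ arc 3 4)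
    (h : ∀ i, R i ↔ i = 0) (x : Fin 3 → AddCircle (5 : ℝ)) :
    ¬ IsRimAssignment R I x := by
  intro hx
  obtain ⟨t, hR, hN, hd⟩ := hx.exists_lift (fun t => (1 < t ∧ t < 2) ∨ (3 < t ∧ t < 4))
    (exists_lift_arc_one_two_union hI)
  have r₀ : rot 3 0 = 1 := rfl
  have r₁ : rot 3 1 = 2 := rfl
  have r₂ : rot 3 2 = 0 := rfl
  have e₀ : R 0 := (h 0).2 rfl
  have e₁ : ¬ R 1 := fun h' => absurd ((h 1).1 h') (by decide)
  have e₂ : ¬ R 2 := fun h' => absurd ((h 2).1 h') (by decide)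
  have t₀ := hR 0 e₀
  have t₁ := hN 1 e₁
  have t₂ := hN 2 e₂
  have d₀ := hd 0
  have d₁ := hd 1
  have d₂ := hd 2
  rw [r₀, if_neg (by tauto)] at d₀
  rw [r₁, if_pos (by tauto)] at d₁
  rw [r₂, if_neg (by tauto)] at d₂
  have d₀ := absBetween_of_mem_arc_one_two_union (by grind) (by grind) (hI d₀)
  have d₁ := absBetween_of_mem_arc_one_four (by grind) (by grind) d₁
  have d₂ := absBetween_of_mem_arc_one_two_union (by grind) (by grind) (hI d₂)
  unfold AbsBetween at d₀ d₁ d₂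
  grind

end Obstructions

section Characterisation

variable {n : ℕ} {R : Fin n → Prop} {I : Set (AddCircle (5 : ℝ))}

theorem exists_three_of_band_one_of_not_triangle {R : Fin 3 → Prop} (hne : ∃ i, R i)
    (hall : ¬ ∀ i, R i) (hone : ¬ ∃ j, ∀ i, R i ↔ i = j) (h₁ : ContainsBand I 1 2) :
    ∃ x, IsRimAssignment R I x := by
  obtain ⟨j, hj⟩ := not_forall.1 hall
  refine exists_isRimAssignment_of_shift j
    (exists_isRimAssignment_three_of_band_one h₁ fun h => absurd h ?_)
  have h0 : ¬ (R 0 ∧ ¬ R 1 ∧ ¬ R 2) := fun h => hone ⟨0, fun i => by fin_cases i <;> simp [h]⟩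
  have h1 : ¬ (¬ R 0 ∧ R 1 ∧ ¬ R 2) := fun h => hone ⟨1, fun i => by fin_cases i <;> simp [h]⟩
  have h2 : ¬ (¬ R 0 ∧ ¬ R 1 ∧ R 2) := fun h => hone ⟨2, fun i => by fin_cases i <;> simp [h]⟩
  have hne : R 0 ∨ R 1 ∨ R 2 := by
    obtain ⟨i, hi⟩ := hne
    fin_cases i <;> simp_all
  have hadd : (1 + 1 : Fin 3) = 2 ∧ (2 + 1 : Fin 3) = 0 ∧ (1 + 2 : Fin 3) = 0 ∧
    (2 + 2 : Fin 3) = 1 := by decide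
  obtain ⟨h11, h21, h12, h22⟩ := hadd
  fin_cases j <;> simp only [Fin.zero_eta, Fin.mk_one, Fin.reduceFinMk, zero_add, add_zero, h11,
    h21, h12, h22] at hj ⊢ <;> tauto

/-- The length `n` is odd, and either every rim edge satisfies `R`, or `n = 3` and exactly one
does. When `R` marks the rim edges of an even subgraph, the latter says that it is a triangle
through the hub. -/
def IsExceptional (R : Fin n → Prop) : Prop :=
  Odd n ∧ ((∀ i, R i) ∨ n = 3 ∧ ∃ j, ∀ i, R i ↔ i = j)

theorem exists_isRimAssignment_of_not_isExceptional (hn : 3 ≤ n) (hne : ∃ i, R i)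
    (h₁ : ContainsBand I 1 2) (h : ¬ IsExceptional R) : ∃ x, IsRimAssignment R I x := by
  rcases Nat.even_or_odd n with he | ho
  · exact exists_isRimAssignment_of_even_of_band_one he h₁
  simp only [IsExceptional, ho, true_and, not_or, not_and] at h
  obtain ⟨hall, hone⟩ := h
  by_cases h3 : n = 3
  · subst h3
    exact exists_three_of_band_one_of_not_triangle hne hall (hone rfl) h₁
  · have : NeZero n := ⟨by omega⟩
    obtain ⟨j, hj⟩ := not_forall.1 hall
    have hn5 : 5 ≤ n := by
      rw [Nat.odd_iff] at ho
      omega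
    refine exists_isRimAssignment_of_shift j
      (exists_isRimAssignment_of_odd_of_band_one hn5 ho h₁ fun i hi hR => absurd hR ?_)
    rwa [Fin.val_eq_zero_iff.1 hi, zero_add]

theorem exists_isRimAssignment_of_band_one_two (hn3 : 3 ≤ n) (hn : Odd n)
    (h₁ : ContainsBand I 1 2) (h₂ : ContainsBand I 2 3) : ∃ x, IsRimAssignment R I x := by
  by_cases h3 : n = 3
  · subst h3
    exact exists_isRimAssignment_three_of_band_one h₁ fun _ => h₂
  · rw [Nat.odd_iff] at hn
    exact exists_isRimAssignment_of_odd_of_band_one (by omega) (Nat.odd_iff.2 hn) h₁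
      fun _ _ _ => h₂

theorem exists_isRimAssignment_of_isExceptional (hn3 : 3 ≤ n) (h : IsExceptional R)
    (h₀ : ContainsBand I 0 1) (h₁ : ContainsBand I 1 2) : ∃ x, IsRimAssignment R I x := by
  have : NeZero n := ⟨by omega⟩
  obtain ⟨ho, hall | ⟨-, j, hj⟩⟩ := h
  · exact exists_isRimAssignment_of_band_zero_one hn3 ho h₀ h₁ (fun i _ => hall i)
      fun i j _ _ => iff_of_true (hall i) (hall j)
  · have hiff : ∀ i, R (i + j) ↔ i.val = 0 := fun i => by
      rw [hj, add_eq_right, Fin.val_eq_zero_iff]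
    refine exists_isRimAssignment_of_shift j
      (exists_isRimAssignment_of_band_zero_one hn3 ho h₀ h₁ (fun i hi => (hiff i).2 hi)
        fun i k hi hk => ?_)
    rw [hiff, hiff]
    exact iff_of_false hi hk

theorem not_isRimAssignment_of_isExceptional (h : IsExceptional R)
    (hI : I ⊆ arc 1 2 ∪ arc 3 4) : ¬ ∃ x, IsRimAssignment R I x := by
  obtain ⟨ho, hall | ⟨rfl, j, hj⟩⟩ := h
  · rintro ⟨x, hx⟩
    exact not_isRimAssignment_of_subset_arc_one_two_union ho.pos.ne' ho hI hall x hx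
  · intro hx
    obtain ⟨x, hx⟩ := IsRimAssignment.exists_shift j hx
    exact not_isRimAssignment_three hI (fun i => by rw [hj, add_eq_right]) x hx

theorem not_exists_isRimAssignment_iff (hn : 3 ≤ n) (hne : ∃ i, R i) (hI : I ∈ SI5) :
    (¬ ∃ x, IsRimAssignment R I x) ↔
      I = ∅ ∨ I = arc 2 3 ∨
        (I ⊆ arc 4 1 ∧ Odd n ∧ ∀ i, R i ∨ R (rot n i) ∨ R (rot n (rot n i))) ∨
        (I ⊆ arc 1 2 ∪ arc 3 4 ∧ IsExceptional R) := by
  constructor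
  · intro hno
    by_contra! hc
    obtain ⟨hI₀, hI₂, h41, h12⟩ := hc
    by_cases h₀ : ContainsBand I 0 1
    · by_cases h3 : Odd n ∧ ∀ i, R i ∨ R (rot n i) ∨ R (rot n (rot n i))
      · by_cases h₂ : ContainsBand I 2 3
        · exact hno (exists_isRimAssignment_of_band_zero_two hn h3.1 hne h₀ h₂)
        by_cases h₁ : ContainsBand I 1 2
        · by_cases hex : IsExceptional R
          · exact hno (exists_isRimAssignment_of_isExceptional hn hex h₀ h₁)
          · exact hno (exists_isRimAssignment_of_not_isExceptional hn hne h₁ hex)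
        · obtain ⟨i, hi⟩ := h41 (subset_arc_four_one hI h₁ h₂) h3.1
          have := h3.2 i
          tauto
      · rcases Nat.even_or_odd n with he | ho
        · exact hno (exists_isRimAssignment_of_even he h₀)
        · obtain ⟨i, hi⟩ := not_forall.1 fun h => h3 ⟨ho, h⟩
          simp only [not_or] at hi
          exact hno (exists_isRimAssignment_of_three_free hn ho h₀ hi.1 hi.2.1 hi.2.2)
    · by_cases h₁ : ContainsBand I 1 2
      · by_cases hex : IsExceptional R
        · by_cases h₂ : ContainsBand I 2 3
          · exact hno (exists_isRimAssignment_of_band_one_two hn hex.1 h₁ h₂)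
          · exact h12 (subset_arc_one_two_union hI h₀ h₂) hex
        · exact hno (exists_isRimAssignment_of_not_isExceptional hn hne h₁ hex)
      · exact hI₂ (eq_arc_two_three hI hI₀ h₀ h₁)
  · rintro (rfl | rfl | ⟨h41, ho, h⟩ | ⟨h12, hex⟩)
    · rintro ⟨x, hx, -⟩
      obtain ⟨i, hi⟩ := hne
      have := hx i
      rw [if_pos hi] at this
      exact this
    · exact fun ⟨x, hx⟩ => not_isRimAssignment_arc_two_three hne x hx
    · exact fun ⟨x, hx⟩ => not_isRimAssignment_of_subset_arc_four_one (by omega) ho h41 h x hx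
    · exact not_isRimAssignment_of_isExceptional hex h12

theorem exists_rim_mem {J : Set (wheel n).E} (hJ : (wheel n).IsEvenSubgraph J)
    (hJne : J.Nonempty) : ∃ i : Fin n, Sum.inl i ∈ J := by
  by_contra! hc
  obtain ⟨i | i, hi⟩ := hJne
  · exact hc i hi
  · obtain ⟨i, rfl⟩ := rot_bijective.2 i
    exact (spoke_mem_iff hJ i).1 hi (iff_of_false (hc _) (hc _))

theorem eq_range_inl_iff {J : Set (wheel n).E} (hJ : (wheel n).IsEvenSubgraph J) :
    J = Set.range Sum.inl ↔ ∀ i : Fin n, Sum.inl i ∈ J := by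
  constructor
  · rintro rfl i
    exact ⟨i, rfl⟩
  · intro h
    ext (i | i)
    · exact iff_of_true (h i) ⟨i, rfl⟩
    · obtain ⟨i, rfl⟩ := rot_bijective.2 i
      refine iff_of_false (fun hi => (spoke_mem_iff hJ i).1 hi (iff_of_true (h _) (h _))) ?_
      rintro ⟨j, hj⟩
      exact Sum.inl_ne_inr hj

theorem rim_avoids_iff (v i : Fin 3) :
    some i ≠ some v ∧ some (rot 3 i) ≠ some v ↔ i = rot 3 v := by
  fin_cases v <;> fin_cases i <;> simp [rot]

theorem spoke_avoids_iff (v i : Fin 3) :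
    none ≠ some v ∧ some (rot 3 i) ≠ some v ↔ ¬ (i = rot 3 v ↔ rot 3 i = rot 3 v) := by
  fin_cases v <;> fin_cases i <;> simp [rot]

theorem isTriangle_three_iff {J : Set (wheel 3).E} (hJ : (wheel 3).IsEvenSubgraph J) :
    IsTriangle 3 J ↔ (∀ i : Fin 3, Sum.inl i ∈ J) ∨ ∃ j, ∀ i : Fin 3, Sum.inl i ∈ J ↔ i = j := by
  constructor
  · rintro ⟨_ | v, rfl⟩
    · exact Or.inl fun i => ⟨Option.some_ne_none i, Option.some_ne_none (rot 3 i)⟩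
    · exact Or.inr ⟨rot 3 v, rim_avoids_iff v⟩
  · rintro (h | ⟨j, hj⟩)
    · refine ⟨none, ?_⟩
      rw [(eq_range_inl_iff hJ).2 h]
      ext (i | i)
      · exact iff_of_true ⟨i, rfl⟩ ⟨Option.some_ne_none i, Option.some_ne_none (rot 3 i)⟩
      · refine iff_of_false ?_ fun hi => hi.1 rfl
        rintro ⟨j, hj⟩
        exact Sum.inl_ne_inr hj
    · obtain ⟨v, rfl⟩ := rot_bijective.2 j
      refine ⟨some v, ?_⟩
      ext (i | i)
      · exact (hj i).trans (rim_avoids_iff v i).symm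
      · obtain ⟨i, rfl⟩ := rot_bijective.2 i
        exact ((spoke_mem_iff hJ i).trans (not_congr (iff_congr (hj i) (hj _)))).trans
          (spoke_avoids_iff v i).symm

theorem isExceptional_rim_iff (hn : 3 ≤ n) {J : Set (wheel n).E}
    (hJ : (wheel n).IsEvenSubgraph J) :
    IsExceptional (fun i : Fin n => Sum.inl i ∈ J) ↔
      (3 < n ∧ Odd n ∧ J = Set.range Sum.inl) ∨ (n = 3 ∧ IsTriangle n J) := by
  rw [eq_range_inl_iff hJ]
  by_cases h3 : n = 3
  · subst h3
    rw [isTriangle_three_iff hJ]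
    have : Odd 3 := by decide
    simp [IsExceptional, this]
  · have : 3 < n := by omega
    simp [IsExceptional, h3, this]

end Characterisation

/-- summary theorem: for `n ≥ 3`, a nonempty even subgraph `J` of
the wheel `W_n` and `I ∈ SI_5`, the wheel has no `σ_{J,I}`-faithful flow iff
(i) `I = ∅`, or (ii) `I = (2,3)`, or (iii) `I ⊆ (4,1)`, `n` is odd and among any
three consecutive external edges at least one is in `J`, or (iv)
`I ⊆ (1,2) ∪ (3,4)` and either `n > 3` is odd and `J` is the external cycle, or
`n = 3` and `J` is a 3-cycle. -/
theorem wheel_no_faithful_iff (n : ℕ) (hn : 3 ≤ n)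
    (J : Set (wheel n).E) (hJ : (wheel n).IsEvenSubgraph J) (hJne : J.Nonempty)
    (I : Set (AddCircle (5 : ℝ))) (hI : I ∈ SI5) :
    ¬ (wheel n).HasFaithfulOn J I ↔
      (I = ∅ ∨ I = arc 2 3 ∨
        (I ⊆ arc 4 1 ∧ Odd n ∧ ∀ i : Fin n, Sum.inl i ∈ J ∨
          Sum.inl (rot n i) ∈ J ∨ Sum.inl (rot n (rot n i)) ∈ J) ∨
        (I ⊆ arc 1 2 ∪ arc 3 4 ∧
          ((3 < n ∧ Odd n ∧ J = Set.range Sum.inl) ∨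
           (n = 3 ∧ IsTriangle n J)))) := by
  rw [hasFaithfulOn_wheel_iff hJ, ← isExceptional_rim_iff hn hJ]
  exact not_exists_isRimAssignment_iff hn (exists_rim_mem hJ hJne) hI
end
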